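/- arXiv:2310.14582 — 2 statements merged into one kernel-verified Lean document; each statement's English description precedes it below -/
import Mathlib

section
/- Suppose (A_i)_{i∈I} are unital subalgebras of A that are free with respect to φ. Consider the compressed algebra pBp with unit p, equipped with the linear functionals ψ := φ restricted to pBp and ψ′ := (φ + φ′) restricted to pBp (one has ψ(p) = 1 and ψ′(p) = 0), and for each i ∈ I let D_i be the subalgebra of pBp generated by {p a p : a ∈ A_i} (note p ∈ D_i). Then the subalgebras (D_i)_{i∈I} are infinitesimally free with respect to (ψ, ψ′): for every n ≥ 1, every (i₁, …, iₙ) with i₁ ≠ i₂, …, i_{n−1} ≠ iₙ, and all bₖ ∈ D_{iₖ} with ψ(bₖ) = 0, one has ψ(b₁ ⋯ bₙ) = 0, and ψ′(b₁ ⋯ bₙ) = ψ(b₁ bₙ) ψ(b₂ b_{n−1}) ⋯ ψ(b_{(n−1)/2} b_{(n+3)/2}) ψ′(b_{(n+1)/2}) if n is odd and i₁ = iₙ, …, i_{(n−1)/2} = i_{(n+3)/2}, while ψ′(b₁ ⋯ bₙ) = 0 otherwise. -/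
open scoped BigOperators

namespace TypeBPrime

variable {B : Type*} [Ring B] [Algebra ℂ B]

/-- The alternating word `a 0 * (f 0 * a 1) * ⋯ * (f (n-1) * a n)`. -/
def altWord {n : ℕ} (a : Fin (n + 1) → B) (f : Fin n → B) : B :=
  a 0 * (List.ofFn fun k : Fin n => f k * a k.succ).prod

/-- Cyclic-antimonotone independence of the pair `(A₁, F₁)` with respect to `(φ, Φ)`:
`Φ(a₀ f₁ a₁ ⋯ fₙ aₙ) = φ(a₀ aₙ) · φ(a₁) ⋯ φ(a_{n-1}) · Φ(f₁ ⋯ fₙ)` for all `n ≥ 1`. -/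
def CyclicAntimonotone (φ Φ : B → ℂ) (A₁ F₁ : Set B) : Prop :=
  ∀ n : ℕ, 0 < n → ∀ (a : Fin (n + 1) → B) (f : Fin n → B),
    (∀ k, a k ∈ A₁) → (∀ k, f k ∈ F₁) →
    Φ (altWord a f) =
      φ (a 0 * a (Fin.last n)) *
        (∏ k ∈ Finset.Ioo (0 : Fin (n + 1)) (Fin.last n), φ (a k)) *
        Φ (List.ofFn f).prod

/-- Freeness of a family of subsets with respect to `φ`:
alternating words in centered elements are centered. -/
def IsFreeFamily {ι : Type*} (φ : B → ℂ) (Alg : ι → Set B) : Prop :=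
  ∀ (n : ℕ) (idx : Fin (n + 1) → ι) (a : Fin (n + 1) → B),
    (∀ k : Fin n, idx k.castSucc ≠ idx k.succ) →
    (∀ k, a k ∈ Alg (idx k)) → (∀ k, φ (a k) = 0) →
    φ (List.ofFn a).prod = 0

/-- Infinitesimal freeness of a family of subsets with respect to `(φ, φ')`. -/
def IsInfFree {ι : Type*} (φ φ' : B → ℂ) (Alg : ι → Set B) : Prop :=
  IsFreeFamily φ Alg ∧
  (∀ (n : ℕ) (idx : Fin (n + 1) → ι) (b : Fin (n + 1) → B),
    (∀ k : Fin n, idx k.castSucc ≠ idx k.succ) →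
    (∀ k, b k ∈ Alg (idx k)) → (∀ k, φ (b k) = 0) →
    ¬(Even n ∧ ∀ k, idx k = idx k.rev) →
    φ' (List.ofFn b).prod = 0) ∧
  (∀ (m : ℕ) (idx : Fin (2 * m + 1) → ι) (b : Fin (2 * m + 1) → B),
    (∀ k : Fin (2 * m), idx k.castSucc ≠ idx k.succ) →
    (∀ k, b k ∈ Alg (idx k)) → (∀ k, φ (b k) = 0) →
    (∀ k, idx k = idx k.rev) →
    φ' (List.ofFn b).prod =
      (∏ j : Fin m,
          φ (b (Fin.castLE (by omega) j) * b (Fin.castLE (by omega) j).rev)) *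
        φ' (b ⟨m, by omega⟩))

/-- Trivial independence with respect to `Φ`: alternating words of length `≥ 2` vanish. -/
def TrivIndep {ι : Type*} (Φ : B → ℂ) (Fj : ι → Set B) : Prop :=
  ∀ (n : ℕ) (idx : Fin (n + 2) → ι) (f : Fin (n + 2) → B),
    (∀ k : Fin (n + 1), idx k.castSucc ≠ idx k.succ) →
    (∀ k, f k ∈ Fj (idx k)) →
    Φ (List.ofFn f).prod = 0

/-- Boolean independence with respect to `ψ`. -/
def BoolIndep {ι : Type*} (ψ : B → ℂ) (C : ι → Set B) : Prop :=
  ∀ (n : ℕ) (idx : Fin (n + 1) → ι) (c : Fin (n + 1) → B),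
    (∀ k : Fin n, idx k.castSucc ≠ idx k.succ) →
    (∀ k, c k ∈ C (idx k)) →
    ψ (List.ofFn c).prod = ∏ k, ψ (c k)

/-- Conditional freeness with respect to `(φ, ψ)`. -/
def CFree {ι : Type*} (φ ψ : B → ℂ) (Alg : ι → Set B) : Prop :=
  IsFreeFamily φ Alg ∧
  ∀ (n : ℕ) (idx : Fin (n + 1) → ι) (b : Fin (n + 1) → B),
    (∀ k : Fin n, idx k.castSucc ≠ idx k.succ) →
    (∀ k, b k ∈ Alg (idx k)) → (∀ k, φ (b k) = 0) →
    ψ (List.ofFn b).prod = ∏ k, ψ (b k)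

/-- The unital subspace `ℂ·1_B + F₁`. -/
def unitize (F₁ : Set B) : Set B :=
  {x | ∃ c : ℂ, ∃ f ∈ F₁, x = algebraMap ℂ B c + f}

/-- The set of alternating words `a₀ f₁ a₁ ⋯ fₙ aₙ` with letters from `A₁` and `F₁`. -/
def wordSet (A₁ F₁ : Set B) : Set B :=
  {x | ∃ n : ℕ, 0 < n ∧ ∃ (a : Fin (n + 1) → B) (f : Fin n → B),
    (∀ k, a k ∈ A₁) ∧ (∀ k, f k ∈ F₁) ∧ x = altWord a f}

/-- `A₁⟨F₁⟩₀`: the linear span of all alternating words `a₀ f₁ a₁ ⋯ fₙ aₙ`. -/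
def wordSpan (A₁ F₁ : Set B) : Set B :=
  (Submodule.span ℂ (wordSet A₁ F₁) : Submodule ℂ B)

/-- The type B′ subalgebra `A₁⟨F₁⟩ = A₁ + A₁⟨F₁⟩₀`. -/
def typeBSub (A₁ F₁ : Set B) : Set B :=
  {x | ∃ a ∈ A₁, ∃ f ∈ wordSpan A₁ F₁, x = a + f}

/-- `(tₙ)` is the inverse Markov–Krein transform of the sequence `(mₙ)`:
`(n+1)·mₙ = Σ_{j=0}^{n} tⱼ m_{n−j}` for all `n ≥ 0`. -/
def IsInvMK (m t : ℕ → ℂ) : Prop :=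
  ∀ n : ℕ, ((n : ℂ) + 1) * m n = ∑ j ∈ Finset.range (n + 1), t j * m (n - j)

section Helpers

set_option linter.unusedSectionVars false
set_option linter.unusedSimpArgs false

/-- List form of cyclic-antimonotone independence for `(A, ℂq)`. -/
lemma cam_list (A : Subalgebra ℂ B) (φ Φ : B →ₗ[ℂ] ℂ) (q : B)
    (hq2 : q * q = q) (hΦq : Φ q = 1)
    (hcamq : CyclicAntimonotone ⇑φ ⇑Φ (A : Set B) {x | ∃ c : ℂ, x = c • q})
    (x z : B) (l : List B) (hx : x ∈ A) (hz : z ∈ A) (hl : ∀ y ∈ l, y ∈ A) :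
    Φ (x * ((l ++ [z]).map (fun y => q * y)).prod) = φ (x * z) * (l.map φ).prod := by
  obtain ⟨n, g, rfl⟩ : ∃ n, ∃ g : Fin n → B, l = List.ofFn g := ⟨_, l.get, by simp⟩
  have hg : ∀ k, g k ∈ A := fun k => hl _ (by simp)
  have h := hcamq (n + 1) (Nat.succ_pos n)
    (Fin.cons x (Fin.snoc g z : Fin (n + 1) → B) : Fin (n + 2) → B) (fun _ => q) ?_ ?_
  · have e1 : altWord (Fin.cons x (Fin.snoc g z : Fin (n + 1) → B) : Fin (n + 2) → B)
        (fun _ => q) = x * ((List.ofFn g ++ [z]).map (fun y => q * y)).prod := by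
      unfold altWord
      rw [List.ofFn_succ']
      simp [-List.ofFn_succ, List.concat_eq_append, List.map_ofFn, Function.comp_def]
    have e2 : (∏ k ∈ Finset.Ioo (0 : Fin (n + 2)) (Fin.last (n + 1)),
        φ ((Fin.cons x (Fin.snoc g z : Fin (n + 1) → B) : Fin (n + 2) → B) k))
        = ((List.ofFn g).map φ).prod := by
      have : Finset.Ioo (0 : Fin (n + 2)) (Fin.last (n + 1)) =
          Finset.univ.map (Fin.castSuccEmb.trans (Fin.succEmb (n + 1))) := by
        ext k
        simp only [Finset.mem_Ioo, Finset.mem_map, Finset.mem_univ, true_and]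
        constructor
        · rintro ⟨h1, h2⟩
          rw [Fin.lt_def] at h1 h2
          simp at h1 h2
          refine ⟨⟨k.1 - 1, by omega⟩, ?_⟩
          ext
          simp
          omega
        · rintro ⟨j, rfl⟩
          simp [Fin.lt_def]
      rw [this, Finset.prod_map, List.map_ofFn, List.prod_ofFn]
      simp
    have e3 : ∀ n : ℕ, q ^ (n + 1) = q := by
      intro n
      induction n with
      | zero => simp
      | succ n ih => rw [pow_succ, ih, hq2]
    rw [e1, e2] at h
    rw [h]
    have e4 : (Fin.cons x (Fin.snoc g z : Fin (n + 1) → B) : Fin (n + 2) → B)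
        (Fin.last (n + 1)) = z := by
      rw [← Fin.succ_last, Fin.cons_succ, Fin.snoc_last]
    rw [e4]
    rw [List.ofFn_const, List.prod_replicate, e3, hΦq, Fin.cons_zero, mul_one]
  · intro k
    refine Fin.cases ?_ (fun j => ?_) k
    · simpa using hx
    · refine Fin.lastCases ?_ (fun j => ?_) j
      · simpa using hz
      · simpa using hg j
  · intro k
    exact ⟨1, by simp⟩

lemma closure_word (A : Subalgebra ℂ B) (q : B) (s : B)
    (hs : s ∈ Submonoid.closure ((A : Set B) ∪ {q})) :
    ∃ x ∈ A, ∃ l : List B, (∀ y ∈ l, y ∈ A) ∧ s = x * (l.map (fun y => q * y)).prod := by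
  induction hs using Submonoid.closure_induction_right with
  | one => exact ⟨1, A.one_mem, [], by simp, by simp⟩
  | mul_right s hs y hy ih =>
    obtain ⟨x, hx, l, hl, rfl⟩ := ih
    rcases hy with hy | hy
    · rcases List.eq_nil_or_concat l with rfl | ⟨l', w, rfl⟩
      · exact ⟨x * y, A.mul_mem hx hy, [], by simp, by simp⟩
      · refine ⟨x, hx, l' ++ [w * y], ?_, by simp [mul_assoc]⟩
        intro t ht
        simp at ht hl
        rcases ht with ht | rfl
        · exact hl t (Or.inl ht)
        · exact A.mul_mem (hl w (Or.inr rfl)) hy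
    · refine ⟨x, hx, l ++ [1], ?_, ?_⟩
      · intro t ht
        simp at ht
        rcases ht with ht | rfl
        · exact hl t ht
        · exact A.one_mem
      · rw [Set.mem_singleton_iff.1 hy]
        simp [mul_assoc]

/-- Under `Φ`, `q a q` acts as `φ(a) q`. -/
lemma cam_reduce (A : Subalgebra ℂ B) (φ Φ : B →ₗ[ℂ] ℂ) (q : B)
    (hq2 : q * q = q) (hΦq : Φ q = 1)
    (hcamq : CyclicAntimonotone ⇑φ ⇑Φ (A : Set B) {x | ∃ c : ℂ, x = c • q})
    (a : B) (ha : a ∈ A) (u v : B) (hu : u ∈ Algebra.adjoin ℂ ((A : Set B) ∪ {q}))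
    (hv : v ∈ Algebra.adjoin ℂ ((A : Set B) ∪ {q})) :
    Φ (u * (q * a * q - φ a • q) * v) = 0 := by
  rw [← Subalgebra.mem_toSubmodule, Algebra.adjoin_eq_span] at hu hv
  induction hu using Submodule.span_induction with
  | zero => simp
  | add x y _ _ h1 h2 => rw [add_mul, add_mul, map_add, h1, h2, add_zero]
  | smul c x _ h1 => rw [smul_mul_assoc, smul_mul_assoc, map_smul, h1, smul_zero]
  | mem u hu =>
  induction hv using Submodule.span_induction with
  | zero => simp
  | add x y _ _ h1 h2 => rw [mul_add, map_add, h1, h2, add_zero]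
  | smul c x _ h1 => rw [mul_smul_comm, map_smul, h1, smul_zero]
  | mem v hv =>
  obtain ⟨x, hx, l, hl, rfl⟩ := closure_word A q u hu
  obtain ⟨y, hy, m, hm, rfl⟩ := closure_word A q v hv
  obtain ⟨m', z, hz⟩ : ∃ m' z, y :: m = m' ++ [z] := by
    rcases List.eq_nil_or_concat (y :: m) with h | ⟨m', z, h⟩
    · simp at h
    · exact ⟨m', z, by simpa using h⟩
  have hmem : ∀ t ∈ m' ++ [z], t ∈ A := by
    rw [← hz]
    intro t ht
    rcases List.mem_cons.1 ht with rfl | ht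
    · exact hy
    · exact hm t ht
  have hzA : z ∈ A := hmem z (by simp)
  have hmA : ∀ t ∈ m', t ∈ A := fun t ht => hmem t (by simp [ht])
  have e1 : x * (l.map (fun y => q * y)).prod * (q * a * q - φ a • q) *
      (y * (m.map (fun y => q * y)).prod) =
      x * (((l ++ a :: m') ++ [z]).map (fun y => q * y)).prod -
      φ a • (x * (((l ++ m') ++ [z]).map (fun y => q * y)).prod) := by
    rw [show (l ++ a :: m') ++ [z] = l ++ a :: (y :: m) by rw [hz]; simp,
      show (l ++ m') ++ [z] = l ++ (y :: m) by rw [hz]; simp]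
    simp only [List.map_append, List.prod_append, List.map_cons, List.prod_cons]
    simp only [mul_sub, sub_mul, mul_assoc, mul_smul_comm, smul_mul_assoc]
  rw [e1, map_sub, map_smul, cam_list A φ Φ q hq2 hΦq hcamq x z _ hx hzA,
    cam_list A φ Φ q hq2 hΦq hcamq x z _ hx hzA]
  · simp
    ring
  · intro t ht
    rcases List.mem_append.1 ht with h | h
    · exact hl t h
    · exact hmA t h
  · intro t ht
    rcases List.mem_append.1 ht with h | h
    · exact hl t h
    · rcases List.mem_cons.1 h with rfl | h
      · exact ha
      · exact hmA t h

/-- A letter `b ≈ a + f` of colour `i`. -/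
structure Letter (ι : Type*) (B : Type*) where
  i : ι
  b : B
  a : B
  f : B

variable {ι : Type*}

/-- Product of the `a`-parts. -/
def aprod (l : List (Letter ι B)) : B := (l.map Letter.a).prod

/-- Product of the `b`-parts. -/
def bprod (l : List (Letter ι B)) : B := (l.map Letter.b).prod

/-- Adjacent colours differ. -/
def Alt (l : List (Letter ι B)) : Prop := l.IsChain (fun x y => x.i ≠ y.i)

/-- `Q S`: span of `c q d`, `c d ∈ S`. -/
def Qspan (q : B) (S : Subalgebra ℂ B) : Submodule ℂ B :=
  Submodule.span ℂ {x | ∃ c ∈ S, ∃ d ∈ S, x = c * q * d}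

/-- Centered letter (only the `a`-part). -/
def Cen (φ : B →ₗ[ℂ] ℂ) (Ai : ι → Subalgebra ℂ B) (x : Letter ι B) : Prop :=
  x.a ∈ Ai x.i ∧ φ x.a = 0

/-- Full letter conditions. -/
def Good (φ : B →ₗ[ℂ] ℂ) (Ai : ι → Subalgebra ℂ B) (q : B) (C : Subalgebra ℂ B)
    (N : Submodule ℂ B) (x : Letter ι B) : Prop :=
  Cen φ Ai x ∧ x.f ∈ Qspan q (Ai x.i) ∧ x.b - x.a - x.f ∈ N ∧ x.b ∈ C ∧
    q * x.b = 0 ∧ x.b * q = 0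

lemma free_list (φ : B →ₗ[ℂ] ℂ) (Ai : ι → Subalgebra ℂ B)
    (hfree : IsFreeFamily ⇑φ (fun i => (Ai i : Set B)))
    (l : List (Letter ι B)) (hne : l ≠ []) (halt : Alt l) (hl : ∀ x ∈ l, Cen φ Ai x) :
    φ (aprod l) = 0 := by
  obtain ⟨n, g, rfl⟩ : ∃ n, ∃ g : Fin n → Letter ι B, l = List.ofFn g := ⟨_, l.get, by simp⟩
  rcases n with _ | n
  · simp at hne
  · have := hfree n (fun k => (g k).i) (fun k => (g k).a) ?_ ?_ ?_
    · rw [aprod, List.map_ofFn]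
      exact this
    · intro k
      have := List.isChain_iff_getElem.1 halt k.1 (by simp)
      simp only [List.getElem_ofFn] at this
      exact this
    · intro k
      exact (hl (g k) (by simp [-List.ofFn_succ])).1
    · intro k
      exact (hl (g k) (by simp [-List.ofFn_succ])).2

/-- Insert an arbitrary element `x ∈ Ai i` between two centered alternating words. -/
lemma free_insert (φ : B →ₗ[ℂ] ℂ) (hφ1 : φ 1 = 1) (Ai : ι → Subalgebra ℂ B)
    (hfree : IsFreeFamily ⇑φ (fun i => (Ai i : Set B)))
    (U V : List (Letter ι B)) (i : ι) (x : B) (hx : x ∈ Ai i)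
    (halt : Alt (U ++ ⟨i, 0, 0, 0⟩ :: V))
    (hU : ∀ y ∈ U, Cen φ Ai y) (hV : ∀ y ∈ V, Cen φ Ai y) :
    φ (aprod U * x * aprod V) = φ x * φ (aprod U * aprod V) := by
  have h := free_list φ Ai hfree (U ++ ⟨i, 0, x - φ x • 1, 0⟩ :: V) (by simp) ?_ ?_
  · simp only [aprod, List.map_append, List.map_cons, List.prod_append, List.prod_cons] at h ⊢
    rw [sub_mul, mul_sub, map_sub, sub_eq_zero] at h
    rw [mul_assoc, h]
    simp
  · unfold Alt at *
    simp only [List.isChain_append, List.isChain_cons, List.head?_cons] at halt ⊢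
    simpa using halt
  · intro y hy
    rcases List.mem_append.1 hy with h | h
    · exact hU y h
    · rcases List.mem_cons.1 h with rfl | h
      · refine ⟨(Ai i).sub_mem hx ((Ai i).smul_mem (Ai i).one_mem _), ?_⟩
        simp [hφ1]
      · exact hV y h

open Classical in
/-- Folding two words from the inside out. -/
noncomputable def fold (φ : B →ₗ[ℂ] ℂ) : List (Letter ι B) → List (Letter ι B) → ℂ
  | [], [] => 1
  | u :: U, v :: V => (if u.i = v.i then φ (u.a * v.a) else 0) * fold φ U V
  | [], _ :: _ => 0
  | _ :: _, [] => 0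

lemma fold_of_length_ne (φ : B →ₗ[ℂ] ℂ) (U V : List (Letter ι B)) (h : U.length ≠ V.length) :
    fold φ U V = 0 := by
  induction U generalizing V with
  | nil => cases V with
    | nil => simp at h
    | cons v V => simp [fold]
  | cons u U ih => cases V with
    | nil => simp [fold]
    | cons v V => rw [fold, ih V (by simpa using h), mul_zero]

lemma fold_ofFn (φ : B →ₗ[ℂ] ℂ) (m : ℕ) (u v : Fin m → Letter ι B) :
    fold φ (List.ofFn u) (List.ofFn v) =
      ∏ k, open Classical in (if (u k).i = (v k).i then φ ((u k).a * (v k).a) else 0) := by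
  induction m with
  | zero => simp [fold]
  | succ m ih => rw [List.ofFn_succ, List.ofFn_succ, fold, ih, Fin.prod_univ_succ]

lemma aprod_append (U V : List (Letter ι B)) : aprod (U ++ V) = aprod U * aprod V := by
  simp [aprod]

lemma aprod_cons (x : Letter ι B) (V : List (Letter ι B)) : aprod (x :: V) = x.a * aprod V := by
  simp [aprod]

lemma bprod_cons (x : Letter ι B) (V : List (Letter ι B)) : bprod (x :: V) = x.b * bprod V := by
  simp [bprod]

lemma aprod_nil : aprod ([] : List (Letter ι B)) = 1 := by simp [aprod]

lemma bprod_nil : bprod ([] : List (Letter ι B)) = 1 := by simp [bprod]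

lemma fold_eq (φ : B →ₗ[ℂ] ℂ) (hφ1 : φ 1 = 1) (Ai : ι → Subalgebra ℂ B)
    (hfree : IsFreeFamily ⇑φ (fun i => (Ai i : Set B)))
    (U V : List (Letter ι B)) (hUa : Alt U.reverse) (hVa : Alt V)
    (hU : ∀ y ∈ U, Cen φ Ai y) (hV : ∀ y ∈ V, Cen φ Ai y) :
    φ (aprod U.reverse * aprod V) = fold φ U V := by
  induction U generalizing V with
  | nil => cases V with
    | nil => simp [fold, aprod, hφ1]
    | cons v V =>
      have := free_list φ Ai hfree (v :: V) (by simp) hVa hV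
      simpa [fold, aprod] using this
  | cons u U ih => cases V with
    | nil =>
      have := free_list φ Ai hfree (u :: U).reverse (by simp) hUa
        (fun y hy => hU y (List.mem_reverse.1 hy))
      rw [aprod_nil, mul_one, this, fold]
    | cons v V =>
      rw [fold]
      have hUa' : Alt U.reverse := by
        unfold Alt at *
        rw [List.reverse_cons, List.isChain_append] at hUa
        exact hUa.1
      have hVa' : Alt V := by
        unfold Alt at *
        rw [List.isChain_cons] at hVa
        exact hVa.2
      have hU' : ∀ y ∈ U, Cen φ Ai y := fun y hy => hU y (by simp [hy])
      have hV' : ∀ y ∈ V, Cen φ Ai y := fun y hy => hV y (by simp [hy])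
      split_ifs with hi
      · rw [← ih V hUa' hVa' hU' hV', List.reverse_cons, aprod_append, aprod_cons, aprod_nil,
          mul_one, aprod_cons]
        rw [← free_insert φ hφ1 Ai hfree U.reverse V u.i (u.a * v.a) _ _
          (fun y hy => hU' y (List.mem_reverse.1 hy)) hV']
        · simp only [mul_assoc]
        · exact (Ai u.i).mul_mem (hU u (by simp)).1 (hi ▸ (hV v (by simp)).1)
        · unfold Alt at *
          rw [List.reverse_cons] at hUa
          simp only [List.isChain_append, List.isChain_cons, List.head?_cons] at hUa hVa ⊢
          simp at hUa hVa ⊢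
          rw [hi] at hUa ⊢
          exact ⟨hUa.1, hVa, hUa.2⟩
      · rw [zero_mul, ← aprod_append]
        refine free_list φ Ai hfree _ (by simp) ?_ ?_
        · unfold Alt at *
          rw [List.isChain_append]
          refine ⟨hUa, hVa, ?_⟩
          simpa using hi
        · intro y hy
          rcases List.mem_append.1 hy with h | h
          · exact hU y (List.mem_reverse.1 h)
          · exact hV y h

/-- The sum of all folded contributions. -/
noncomputable def Ssum (φ Φ : B →ₗ[ℂ] ℂ) : List (Letter ι B) → List (Letter ι B) → ℂ
  | _, [] => 0
  | U, x :: V => Φ x.f * fold φ U V + Ssum φ Φ (x :: U) V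

lemma Ssum_zero (φ Φ : B →ₗ[ℂ] ℂ) (U V : List (Letter ι B))
    (h : V.length ≤ U.length ∨ Even (U.length + V.length)) : Ssum φ Φ U V = 0 := by
  induction V generalizing U with
  | nil => simp [Ssum]
  | cons x V ih =>
    rw [Ssum, ih, fold_of_length_ne, mul_zero, zero_add]
    · rintro h'
      rcases h with h | h
      · simp at h
        omega
      · simp [h', Nat.even_iff] at h
        omega
    · rcases h with h | h
      · left
        simp at h ⊢
        omega
      · right
        simp [Nat.even_iff] at h ⊢
        omega

lemma Ssum_mid (φ Φ : B →ₗ[ℂ] ℂ) (U W V : List (Letter ι B)) (x : Letter ι B)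
    (h : U.length + W.length = V.length) :
    Ssum φ Φ U (W ++ x :: V) = Φ x.f * fold φ (W.reverse ++ U) V := by
  induction W generalizing U with
  | nil =>
    simp at h
    rw [List.nil_append, Ssum, Ssum_zero, add_zero]
    · simp
    · left
      simp [h]
  | cons w W ih =>
    rw [List.cons_append, Ssum, ih, fold_of_length_ne]
    · simp
    · simp at h ⊢
      omega
    · simp at h ⊢
      omega

section Main

variable (A C : Subalgebra ℂ B) (F N : Submodule ℂ B) (φ Φ φ' : B →ₗ[ℂ] ℂ) (q : B)
  (Ai : ι → Subalgebra ℂ B)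

/-- The interface facts. -/
structure Setup : Prop where
  hFL : ∀ b : B, ∀ f ∈ F, b * f ∈ F
  hFR : ∀ b : B, ∀ f ∈ F, f * b ∈ F
  φ1 : φ 1 = 1
  φF : ∀ f ∈ F, φ f = 0
  φ'A : ∀ a ∈ A, φ' a = 0
  φ'F : ∀ f ∈ F, φ' f = Φ f
  qF : q ∈ F
  q2 : q * q = q
  AC : A ≤ C
  qC : q ∈ C
  NF : N ≤ F
  NΦ : ∀ z ∈ N, Φ z = 0
  NL : ∀ c ∈ C, ∀ z ∈ N, c * z ∈ N
  NR : ∀ c ∈ C, ∀ z ∈ N, z * c ∈ N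
  Nq : ∀ a ∈ A, q * a * q - φ a • q ∈ N
  Φq : ∀ a ∈ A, ∀ b ∈ A, Φ (a * q * b) = φ (a * b)
  AiA : ∀ i, Ai i ≤ A
  free : IsFreeFamily ⇑φ (fun i => (Ai i : Set B))

variable {A C F N φ Φ φ' q Ai}

lemma Setup.QC (H : Setup A C F N φ Φ φ' q Ai) {i : ι} {f : B} (hf : f ∈ Qspan q (Ai i)) : f ∈ C := by
  unfold Qspan at hf
  have : Submodule.span ℂ {x | ∃ c ∈ Ai i, ∃ d ∈ Ai i, x = c * q * d} ≤
      Subalgebra.toSubmodule C := by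
    rw [Submodule.span_le]
    rintro x ⟨c, hc, d, hd, rfl⟩
    exact C.mul_mem (C.mul_mem (H.AC (H.AiA i hc)) H.qC) (H.AC (H.AiA i hd))
  exact this hf

lemma Setup.QF (H : Setup A C F N φ Φ φ' q Ai) {i : ι} {f : B} (hf : f ∈ Qspan q (Ai i)) : f ∈ F := by
  unfold Qspan at hf
  refine (Submodule.span_le.2 ?_ : Submodule.span ℂ _ ≤ F) hf
  rintro x ⟨c, hc, d, hd, rfl⟩
  exact H.hFR _ _ (H.hFL _ _ H.qF)

lemma Setup.aA (H : Setup A C F N φ Φ φ' q Ai) {l : List (Letter ι B)} (hl : ∀ x ∈ l, Cen φ Ai x) : aprod l ∈ A := by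
  refine A.list_prod_mem ?_
  intro y hy
  obtain ⟨x, hx, rfl⟩ := List.mem_map.1 hy
  exact H.AiA _ (hl x hx).1

lemma Setup.bC (H : Setup A C F N φ Φ φ' q Ai) {l : List (Letter ι B)} (hl : ∀ x ∈ l, Good φ Ai q C N x) : bprod l ∈ C := by
  refine C.list_prod_mem ?_
  intro y hy
  obtain ⟨x, hx, rfl⟩ := List.mem_map.1 hy
  exact (hl x hx).2.2.2.1

/-- `q x b₁ ⋯ bₙ ≈ q x a₁ ⋯ aₙ` for a nonempty centered alternating word `x`. -/
lemma Setup.push (H : Setup A C F N φ Φ φ' q Ai) (X V : List (Letter ι B)) (hX : X ≠ []) (halt : Alt (X ++ V))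
    (hXc : ∀ x ∈ X, Cen φ Ai x) (hV : ∀ x ∈ V, Good φ Ai q C N x) :
    q * aprod X * bprod V - q * aprod X * aprod V ∈ N := by
  induction V generalizing X with
  | nil => simp [aprod_nil, bprod_nil]
  | cons v V ih =>
    obtain ⟨hc, hf, hn, hbC, -, -⟩ := hV v (by simp)
    have hV' : ∀ x ∈ V, Good φ Ai q C N x := fun y hy => hV y (by simp [hy])
    have hXA := H.aA hXc
    have h1 := ih (X ++ [v]) (by simp) (by simpa using halt) (by
      intro x hx
      rcases List.mem_append.1 hx with h | h
      · exact hXc x h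
      · rw [List.mem_singleton.1 h]
        exact hc) hV'
    rw [aprod_append, aprod_cons, aprod_nil, mul_one] at h1
    have h2 : q * aprod X * v.f ∈ N := by
      generalize v.f = vf at hf
      unfold Qspan at hf
      induction hf using Submodule.span_induction with
      | zero => simp
      | add x y _ _ h1 h2 => rw [mul_add]; exact N.add_mem h1 h2
      | smul c x _ h1 => rw [mul_smul_comm]; exact N.smul_mem c h1
      | mem x hx =>
        obtain ⟨c, hc', d, hd, rfl⟩ := hx
        have e : φ (aprod X * c) = 0 := by
          have := free_insert φ H.φ1 Ai H.free X [] v.i c hc' ?_ hXc (by simp)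
          · rw [aprod_nil, mul_one, mul_one, free_list φ Ai H.free X hX ?_ hXc, mul_zero] at this
            · exact this
            · unfold Alt at *
              exact (List.isChain_append.1 halt).1
          · unfold Alt at *
            simp only [List.isChain_append, List.isChain_cons, List.head?_cons] at halt ⊢
            simp at halt ⊢
            exact ⟨halt.1, halt.2.2⟩
        have h3 := H.NR d (H.AC (H.AiA _ hd)) _ (H.Nq (aprod X * c) (A.mul_mem hXA (H.AiA _ hc')))
        rw [e, zero_smul, sub_zero] at h3
        simpa only [mul_assoc] using h3
    have h4 : q * aprod X * (v.b - v.a - v.f) ∈ N :=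
      H.NL _ (C.mul_mem H.qC (H.AC hXA)) _ hn
    have h5 := H.NR _ (H.bC hV') _ (N.add_mem h2 h4)
    have h6 := N.add_mem h5 h1
    rw [bprod_cons, aprod_cons]
    convert h6 using 1
    noncomm_ring

/-- `f b₁ ⋯ bₙ ≈ f p a₁ ⋯ aₙ`, `n ≥ 1`. -/
lemma Setup.push_f (H : Setup A C F N φ Φ φ' q Ai) (i : ι) (f : B) (hf : f ∈ Qspan q (Ai i)) (V : List (Letter ι B))
    (hVne : V ≠ []) (halt : Alt (⟨i, 0, 0, 0⟩ :: V)) (hV : ∀ x ∈ V, Good φ Ai q C N x) :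
    f * bprod V - f * (1 - q) * aprod V ∈ N := by
  have hVA : aprod V ∈ A := H.aA (fun x hx => (hV x hx).1)
  have hqb : q * bprod V = 0 := by
    cases V with
    | nil => simp at hVne
    | cons v V => rw [bprod_cons, ← mul_assoc, (hV v (by simp)).2.2.2.2.1, zero_mul]
  unfold Qspan at hf
  induction hf using Submodule.span_induction with
  | zero => simp
  | add x y _ _ h1 h2 =>
    convert N.add_mem h1 h2 using 1
    noncomm_ring
  | smul c x _ h1 =>
    convert N.smul_mem c h1 using 1
    simp only [smul_mul_assoc, smul_sub]
  | mem x hx =>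
    obtain ⟨c, hc, d, hd, rfl⟩ := hx
    have h1 := H.push [⟨i, 0, d - φ d • 1, 0⟩] V (by simp) ?_ ?_ hV
    · rw [aprod_cons, aprod_nil, mul_one] at h1
      have h2 := H.NL c (H.AC (H.AiA _ hc)) _ h1
      have h3 := H.NR _ (H.AC hVA) _ (H.NL c (H.AC (H.AiA _ hc)) _ (H.Nq d (H.AiA _ hd)))
      convert N.add_mem h2 h3 using 1
      simp only [mul_sub, sub_mul, mul_assoc, mul_smul_comm, smul_mul_assoc, mul_one, one_mul,
        hqb, smul_zero, mul_zero]
      abel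
    · unfold Alt at *
      simp only [List.singleton_append, List.isChain_cons] at halt ⊢
      exact halt
    · intro x hx
      rw [List.mem_singleton.1 hx]
      exact ⟨(Ai i).sub_mem hd ((Ai i).smul_mem (Ai i).one_mem _), by simp [H.φ1]⟩

lemma Setup.Φ_mid (H : Setup A C F N φ Φ φ' q Ai) (U V : List (Letter ι B)) (i : ι) (f : B) (hf : f ∈ Qspan q (Ai i))
    (halt : Alt (U ++ ⟨i, 0, 0, 0⟩ :: V))
    (hU : ∀ y ∈ U, Cen φ Ai y) (hV : ∀ y ∈ V, Cen φ Ai y) :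
    Φ (aprod U * f * aprod V) = Φ f * φ (aprod U * aprod V) := by
  unfold Qspan at hf
  induction hf using Submodule.span_induction with
  | zero => simp
  | add x y _ _ h1 h2 => rw [mul_add, add_mul, map_add, map_add, h1, h2, add_mul]
  | smul c x _ h1 => rw [mul_smul_comm, smul_mul_assoc, map_smul, map_smul, h1, smul_mul_assoc]
  | mem x hx =>
    obtain ⟨c, hc, d, hd, rfl⟩ := hx
    rw [H.Φq c (H.AiA _ hc) d (H.AiA _ hd),
      ← free_insert φ H.φ1 Ai H.free U V i (c * d) ((Ai i).mul_mem hc hd) halt hU hV]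
    have := H.Φq (aprod U * c) (A.mul_mem (H.aA hU) (H.AiA _ hc)) (d * aprod V)
      (A.mul_mem (H.AiA _ hd) (H.aA hV))
    simpa only [mul_assoc] using this

lemma Setup.tele (H : Setup A C F N φ Φ φ' q Ai) (U V : List (Letter ι B)) (halt : Alt (U.reverse ++ V))
    (hU : ∀ y ∈ U, Cen φ Ai y) (hV : ∀ x ∈ V, Good φ Ai q C N x) :
    φ' (aprod U.reverse * bprod V) = Ssum φ Φ U V := by
  induction V generalizing U with
  | nil =>
    rw [bprod_nil, mul_one, Ssum]
    exact H.φ'A _ (H.aA (fun y hy => hU y (List.mem_reverse.1 hy)))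
  | cons x V ih =>
    have hx := hV x (by simp)
    obtain ⟨hc, hf, hn, hbC, hqb, hbq⟩ := hx
    have hU' : ∀ y ∈ U.reverse, Cen φ Ai y := fun y hy => hU y (List.mem_reverse.1 hy)
    have hV' : ∀ x ∈ V, Good φ Ai q C N x := fun y hy => hV y (by simp [hy])
    have hVc : ∀ x ∈ V, Cen φ Ai x := fun y hy => (hV' y hy).1
    have hUA := H.aA hU'
    have hVA := H.aA hVc
    have h1 := ih (x :: U) (by simpa using halt) (by
      intro y hy
      rcases List.mem_cons.1 hy with rfl | h
      · exact hc
      · exact hU y h) hV'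
    have halt0 : Alt (U.reverse ++ (⟨x.i, 0, 0, 0⟩ : Letter ι B) :: V) := by
      unfold Alt at *
      simp only [List.isChain_append, List.isChain_cons, List.head?_cons] at halt ⊢
      simpa using halt
    have haltU : Alt U.reverse := by
      unfold Alt at *
      exact (List.isChain_append.1 halt).1
    have halt1 : Alt ((⟨x.i, 0, 0, 0⟩ : Letter ι B) :: V) := by
      unfold Alt at *
      exact (List.isChain_append.1 halt0).2.1
    have haltV : Alt V := by
      unfold Alt at *
      exact (List.isChain_cons.1 halt1).2
    have hmid := H.Φ_mid U.reverse V x.i x.f hf halt0 hU' hVc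
    rw [fold_eq φ H.φ1 Ai H.free U V haltU haltV hU hVc] at hmid
    have h2 : Φ (aprod U.reverse * x.f * bprod V) = Φ x.f * fold φ U V := by
      rw [← hmid]
      by_cases hVne : V = []
      · subst hVne
        rw [aprod_nil, bprod_nil]
      · have h3 := H.NΦ _ (H.NL _ (H.AC hUA) _ (H.push_f x.i x.f hf V hVne halt1 hV'))
        have h4 := H.NΦ _ (H.NR _ (H.AC hVA) _ (H.NL _ (H.AC hUA) _ (H.NR q H.qC _ hn)))
        have h5 : Φ (aprod U.reverse * x.a * q * aprod V) = 0 := by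
          rw [H.Φq _ (A.mul_mem hUA (H.AiA _ hc.1)) _ hVA]
          have := free_list φ Ai H.free (U.reverse ++ x :: V) (by simp) halt (by
            intro y hy
            rcases List.mem_append.1 hy with h | h
            · exact hU' y h
            · exact (hV y h).1)
          rw [aprod_append, aprod_cons] at this
          simpa only [mul_assoc] using this
        rw [sub_mul, sub_mul, hbq] at h4
        simp only [mul_sub, sub_mul, mul_assoc, map_sub, mul_one, mul_zero, zero_sub, map_neg,
          neg_mul, one_mul, mul_neg, zero_mul] at h3 h4 h5 ⊢
        rw [h5] at h4
        linear_combination h3 + h4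
    have h6 : φ' (aprod U.reverse * x.f * bprod V) = Φ (aprod U.reverse * x.f * bprod V) :=
      H.φ'F _ (H.hFR _ _ (H.hFL _ _ (H.QF hf)))
    have h7 : φ' (aprod U.reverse * (x.b - x.a - x.f) * bprod V) = 0 := by
      have := H.NR _ (H.bC hV') _ (H.NL _ (H.AC hUA) _ hn)
      rw [H.φ'F _ (H.NF this), H.NΦ _ this]
    rw [Ssum, ← h1, ← h2, ← h6, bprod_cons, List.reverse_cons, aprod_append, aprod_cons, aprod_nil]
    simp only [mul_sub, sub_mul, mul_assoc, map_sub, mul_one] at h7 ⊢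
    linear_combination h7

lemma Setup.φb (H : Setup A C F N φ Φ φ' q Ai) (V : List (Letter ι B)) (hV : ∀ x ∈ V, Good φ Ai q C N x) :
    bprod V - aprod V ∈ F := by
  induction V with
  | nil => simp [aprod_nil, bprod_nil]
  | cons x V ih =>
    have h1 := ih (fun y hy => hV y (by simp [hy]))
    obtain ⟨hc, hf, hn, hbC, hqb, hbq⟩ := hV x (by simp)
    rw [bprod_cons, aprod_cons]
    have h2 := F.add_mem (H.NF hn) (H.QF hf)
    convert F.add_mem (H.hFL x.b _ h1) (H.hFR (aprod V) _ h2) using 1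
    noncomm_ring

lemma Setup.φb1 (H : Setup A C F N φ Φ φ' q Ai) (x : Letter ι B) (hx : Good φ Ai q C N x) : x.b - x.a ∈ F := by
  have := H.φb [x] (by simpa using hx)
  simpa [aprod, bprod] using this

lemma Setup.φ'b (H : Setup A C F N φ Φ φ' q Ai) (x : Letter ι B) (hx : Good φ Ai q C N x) : φ' x.b = Φ x.f := by
  obtain ⟨hc, hf, hn, -⟩ := hx
  have h1 := H.φ'F _ (H.NF hn)
  rw [H.NΦ _ hn, map_sub, map_sub, H.φ'A _ (H.AiA _ hc.1), H.φ'F _ (H.QF hf)] at h1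
  linear_combination h1

lemma Setup.Qmul (H : Setup A C F N φ Φ φ' q Ai) {i : ι} {f g : B} (hf : f ∈ Qspan q (Ai i)) (hg : g ∈ Qspan q (Ai i)) :
    ∃ h ∈ Qspan q (Ai i), f * g - h ∈ N := by
  unfold Qspan at hf
  induction hf using Submodule.span_induction with
  | zero => exact ⟨0, Submodule.zero_mem _, by simp⟩
  | add x y _ _ h1 h2 =>
    obtain ⟨h, hh, hn⟩ := h1
    obtain ⟨h', hh', hn'⟩ := h2
    refine ⟨h + h', Submodule.add_mem _ hh hh', ?_⟩
    convert N.add_mem hn hn' using 1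
    noncomm_ring
  | smul c x _ h1 =>
    obtain ⟨h, hh, hn⟩ := h1
    refine ⟨c • h, Submodule.smul_mem _ _ hh, ?_⟩
    convert N.smul_mem c hn using 1
    rw [smul_sub, smul_mul_assoc]
  | mem x hx =>
  obtain ⟨c, hc, d, hd, rfl⟩ := hx
  unfold Qspan at hg
  induction hg using Submodule.span_induction with
  | zero => exact ⟨0, Submodule.zero_mem _, by simp⟩
  | add x y _ _ h1 h2 =>
    obtain ⟨h, hh, hn⟩ := h1
    obtain ⟨h', hh', hn'⟩ := h2
    refine ⟨h + h', Submodule.add_mem _ hh hh', ?_⟩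
    convert N.add_mem hn hn' using 1
    noncomm_ring
  | smul c x _ h1 =>
    obtain ⟨h, hh, hn⟩ := h1
    refine ⟨c • h, Submodule.smul_mem _ _ hh, ?_⟩
    convert N.smul_mem c hn using 1
    rw [smul_sub, mul_smul_comm]
  | mem x hx =>
    obtain ⟨c', hc', d', hd', rfl⟩ := hx
    refine ⟨φ (d * c') • (c * q * d'), Submodule.smul_mem _ _
      (Submodule.subset_span ⟨c, hc, d', hd', rfl⟩), ?_⟩
    have h3 := H.NR _ (H.AC (H.AiA _ hd')) _ (H.NL c (H.AC (H.AiA _ hc)) _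
      (H.Nq (d * c') (H.AiA _ ((Ai i).mul_mem hd hc'))))
    convert h3 using 1
    simp only [mul_sub, sub_mul, mul_assoc, mul_smul_comm, smul_mul_assoc]

lemma Setup.Qleft (H : Setup A C F N φ Φ φ' q Ai) {i : ι} {a f : B} (ha : a ∈ Ai i) (hf : f ∈ Qspan q (Ai i)) :
    a * f ∈ Qspan q (Ai i) := by
  have : Qspan q (Ai i) ≤ (Qspan q (Ai i)).comap (LinearMap.mulLeft ℂ a) := by
    conv_lhs => rw [Qspan]
    rw [Submodule.span_le]
    rintro x ⟨c, hc, d, hd, rfl⟩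
    exact Submodule.subset_span ⟨a * c, (Ai i).mul_mem ha hc, d, hd, by simp [mul_assoc]⟩
  exact this hf

lemma Setup.Qright (H : Setup A C F N φ Φ φ' q Ai) {i : ι} {a f : B} (ha : a ∈ Ai i) (hf : f ∈ Qspan q (Ai i)) :
    f * a ∈ Qspan q (Ai i) := by
  have : Qspan q (Ai i) ≤ (Qspan q (Ai i)).comap (LinearMap.mulRight ℂ a) := by
    conv_lhs => rw [Qspan]
    rw [Submodule.span_le]
    rintro x ⟨c, hc, d, hd, rfl⟩
    exact Submodule.subset_span ⟨c, hc, d * a, (Ai i).mul_mem hd ha, by simp [mul_assoc]⟩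
  exact this hf

lemma Setup.rep (H : Setup A C F N φ Φ φ' q Ai) (i : ι) (b : B)
    (hb : b ∈ NonUnitalAlgebra.adjoin ℂ {x | ∃ a ∈ Ai i, x = (1 - q) * a * (1 - q)}) :
    (∃ a ∈ Ai i, ∃ f ∈ Qspan q (Ai i), b - a - f ∈ N) ∧ b ∈ C ∧ q * b = 0 ∧ b * q = 0 := by
  have hqp : q * (1 - q) = 0 := by rw [mul_sub, H.q2, mul_one, sub_self]
  have hpq : (1 - q) * q = 0 := by rw [sub_mul, H.q2, one_mul, sub_self]
  induction hb using NonUnitalAlgebra.adjoin_induction with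
  | mem x hx =>
    obtain ⟨a, ha, rfl⟩ := hx
    have haA := H.AiA i ha
    refine ⟨⟨a, ha, φ a • (1 * q * 1) - 1 * q * a - a * q * 1, ?_, ?_⟩, ?_, ?_, ?_⟩
    · refine Submodule.sub_mem _ (Submodule.sub_mem _ (Submodule.smul_mem _ _ ?_) ?_) ?_
      · exact Submodule.subset_span ⟨1, (Ai i).one_mem, 1, (Ai i).one_mem, rfl⟩
      · exact Submodule.subset_span ⟨1, (Ai i).one_mem, a, ha, rfl⟩
      · exact Submodule.subset_span ⟨a, ha, 1, (Ai i).one_mem, rfl⟩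
    · convert H.Nq a haA using 1
      simp only [mul_sub, sub_mul, one_mul, mul_one]
      abel
    · exact C.mul_mem (C.mul_mem (C.sub_mem C.one_mem H.qC) (H.AC haA))
        (C.sub_mem C.one_mem H.qC)
    · rw [← mul_assoc, ← mul_assoc, hqp, zero_mul, zero_mul]
    · rw [mul_assoc, hpq, mul_zero]
  | zero => exact ⟨⟨0, zero_mem _, 0, zero_mem _, by simp⟩, zero_mem _, by simp, by simp⟩
  | add x y _ _ hx hy =>
    obtain ⟨⟨a, ha, f, hf, hn⟩, hC, h1, h2⟩ := hx
    obtain ⟨⟨a', ha', f', hf', hn'⟩, hC', h1', h2'⟩ := hy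
    refine ⟨⟨a + a', add_mem ha ha', f + f', add_mem hf hf', ?_⟩, add_mem hC hC', ?_, ?_⟩
    · convert N.add_mem hn hn' using 1
      abel
    · rw [mul_add, h1, h1', add_zero]
    · rw [add_mul, h2, h2', add_zero]
  | smul c x _ hx =>
    obtain ⟨⟨a, ha, f, hf, hn⟩, hC, h1, h2⟩ := hx
    refine ⟨⟨c • a, (Ai i).smul_mem ha c, c • f, Submodule.smul_mem _ c hf, ?_⟩,
      C.smul_mem hC c, ?_, ?_⟩
    · convert N.smul_mem c hn using 1
      rw [smul_sub, smul_sub]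
    · rw [mul_smul_comm, h1, smul_zero]
    · rw [smul_mul_assoc, h2, smul_zero]
  | mul x y _ _ hx hy =>
    obtain ⟨⟨a, ha, f, hf, hn⟩, hC, h1, h2⟩ := hx
    obtain ⟨⟨a', ha', f', hf', hn'⟩, hC', h1', h2'⟩ := hy
    obtain ⟨g, hg, hgn⟩ := H.Qmul hf hf'
    refine ⟨⟨a * a', (Ai i).mul_mem ha ha', a * f' + f * a' + g,
      add_mem (add_mem (H.Qleft ha hf') (H.Qright ha' hf)) hg, ?_⟩, C.mul_mem hC hC', ?_, ?_⟩
    · have h3 := H.NR _ hC' _ hn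
      have h4 := H.NL _ (C.add_mem (H.AC (H.AiA _ ha)) (H.QC hf)) _ hn'
      convert N.add_mem (N.add_mem h3 h4) hgn using 1
      noncomm_ring
    · rw [← mul_assoc, h1, zero_mul]
    · rw [mul_assoc, h2', mul_zero]

lemma Setup.letters (H : Setup A C F N φ Φ φ' q Ai) {n : ℕ} (idx : Fin n → ι) (b : Fin n → B)
    (hb : ∀ k, b k ∈ (NonUnitalAlgebra.adjoin ℂ
        {x | ∃ a ∈ Ai (idx k), x = (1 - q) * a * (1 - q)} : Set B))
    (h0 : ∀ k, φ (b k) = 0) :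
    ∃ g : Fin n → Letter ι B, (∀ k, (g k).i = idx k) ∧ (∀ k, (g k).b = b k) ∧
      ∀ k, Good φ Ai q C N (g k) := by
  have h := fun k => H.rep (idx k) (b k) (hb k)
  choose h1 h2 h3 h4 using h
  choose a ha f hf hn using h1
  refine ⟨fun k => ⟨idx k, b k, a k, f k⟩, fun _ => rfl, fun _ => rfl, fun k => ?_⟩
  refine ⟨⟨ha k, ?_⟩, hf k, hn k, h2 k, h3 k, h4 k⟩
  have := H.φF _ (F.add_mem (H.NF (hn k)) (H.QF (hf k)))
  rw [sub_add_cancel, map_sub, h0 k] at this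
  show φ (a k) = 0
  linear_combination -this

lemma alt_ofFn {n : ℕ} (g : Fin (n + 1) → Letter ι B) (idx : Fin (n + 1) → ι)
    (hi : ∀ k, (g k).i = idx k) (h : ∀ k : Fin n, idx k.castSucc ≠ idx k.succ) :
    Alt (List.ofFn g) := by
  unfold Alt
  rw [List.isChain_iff_getElem]
  intro k hk
  have hk' : k < n := by simpa using hk
  have := h ⟨k, hk'⟩
  rw [← hi, ← hi] at this
  simpa [-List.ofFn_succ] using this

lemma Setup.φ_zero (H : Setup A C F N φ Φ φ' q Ai) {n : ℕ} (g : Fin (n + 1) → Letter ι B) (halt : Alt (List.ofFn g))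
    (hg : ∀ k, Good φ Ai q C N (g k)) : φ (bprod (List.ofFn g)) = 0 := by
  have h1 := H.φF _ (H.φb (List.ofFn g) (by simpa [-List.ofFn_succ, List.mem_ofFn] using hg))
  rw [map_sub, free_list φ Ai H.free _ (by simp) halt
    (by simpa [-List.ofFn_succ, List.mem_ofFn] using fun k => (hg k).1)] at h1
  simpa using h1

lemma Setup.φ'_eq (H : Setup A C F N φ Φ φ' q Ai) {n : ℕ} (g : Fin n → Letter ι B) (halt : Alt (List.ofFn g))
    (hg : ∀ k, Good φ Ai q C N (g k)) :
    φ' (bprod (List.ofFn g)) = Ssum φ Φ [] (List.ofFn g) := by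
  rw [← H.tele [] (List.ofFn g) (by simpa using halt) (by simp)
    (by simpa [-List.ofFn_succ, List.mem_ofFn] using hg)]
  simp [aprod_nil]

lemma split_mid {m : ℕ} (g : Fin (2 * m + 1) → Letter ι B) :
    Ssum φ Φ [] (List.ofFn g) = Φ (g ⟨m, by omega⟩).f * ∏ j : Fin m,
      open Classical in (if (g ⟨j, by omega⟩).i = (g ⟨2 * m - j, by omega⟩).i then
        φ ((g ⟨j, by omega⟩).a * (g ⟨2 * m - j, by omega⟩).a) else 0) := by
  have e : List.ofFn g = (List.ofFn fun j : Fin m => g ⟨m - 1 - j, by omega⟩).reverse ++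
      g ⟨m, by omega⟩ :: List.ofFn fun j : Fin m => g ⟨m + 1 + j, by omega⟩ := by
    apply List.ext_getElem
    · simp
      omega
    · intro k h1 h2
      simp at h1
      rw [List.getElem_append]
      split_ifs with hk
      · simp at hk
        simp only [List.getElem_reverse, List.getElem_ofFn, List.length_ofFn]
        congr 2
        omega
      · simp at hk
        rw [List.getElem_cons]
        split_ifs with hk2
        · simp at hk2
          simp only [List.getElem_ofFn]
          congr 2
          omega
        · simp at hk2
          simp only [List.getElem_ofFn, List.length_reverse, List.length_ofFn]
          congr 2
          omega
  rw [e, Ssum_mid _ _ _ _ _ _ (by simp), List.append_nil, List.reverse_reverse, fold_ofFn]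
  congr 1
  rw [← Equiv.prod_comp Fin.revPerm]
  refine Finset.prod_congr rfl fun j _ => ?_
  have e1 : ∀ h h', g ⟨m - 1 - (Fin.revPerm j : Fin m).1, h⟩ = g ⟨j, h'⟩ := by
    intro h h'
    congr 2
    simp [Fin.val_rev]
    omega
  have e2 : ∀ h h', g ⟨m + 1 + (Fin.revPerm j : Fin m).1, h⟩ = g ⟨2 * m - j, h'⟩ := by
    intro h h'
    congr 2
    simp [Fin.val_rev]
    omega
  rw [e1, e2]

end Main

end Helpers

theorem statement12
    {B : Type*} [Ring B] [Algebra ℂ B]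
    (A : Subalgebra ℂ B) (F : Submodule ℂ B)
    (hFmulL : ∀ b : B, ∀ f ∈ F, b * f ∈ F)
    (hFmulR : ∀ b : B, ∀ f ∈ F, f * b ∈ F)
    (hAF : ∀ x ∈ A, x ∈ F → x = 0)
    (hdec : ∀ x : B, ∃ a ∈ A, ∃ f ∈ F, x = a + f)
    (φ Φ φ' : B →ₗ[ℂ] ℂ)
    (hφ1 : φ 1 = 1) (hφF : ∀ f ∈ F, φ f = 0)
    (hφ'A : ∀ a ∈ A, φ' a = 0) (hφ'F : ∀ f ∈ F, φ' f = Φ f)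
    (q : B) (hqF : q ∈ F) (hq2 : q * q = q) (hΦq : Φ q = 1)
    (hcamq : CyclicAntimonotone ⇑φ ⇑Φ (A : Set B) {x | ∃ c : ℂ, x = c • q})
    {ι : Type*}
    (Ai : ι → Subalgebra ℂ B) (hAi : ∀ i, Ai i ≤ A)
    (hfree : IsFreeFamily ⇑φ (fun i => (Ai i : Set B))) :
    IsInfFree ⇑φ (fun b => φ b + φ' b)
      (fun i => (NonUnitalAlgebra.adjoin ℂ
        {x | ∃ a ∈ Ai i, x = (1 - q) * a * (1 - q)} : Set B)) := by
  let C : Subalgebra ℂ B := Algebra.adjoin ℂ ((A : Set B) ∪ {q})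
  let N : Submodule ℂ B :=
    { carrier := {z | z ∈ F ∧ ∀ u ∈ C, ∀ v ∈ C, Φ (u * z * v) = 0}
      zero_mem' := ⟨F.zero_mem, by simp⟩
      add_mem' := by
        rintro x y ⟨h1, h2⟩ ⟨h3, h4⟩
        refine ⟨F.add_mem h1 h3, fun u hu v hv => ?_⟩
        rw [mul_add, add_mul, map_add, h2 u hu v hv, h4 u hu v hv, add_zero]
      smul_mem' := by
        rintro c x ⟨h1, h2⟩
        refine ⟨F.smul_mem c h1, fun u hu v hv => ?_⟩
        rw [mul_smul_comm, smul_mul_assoc, map_smul, h2 u hu v hv, smul_zero] }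
  have H : Setup A C F N φ Φ φ' q Ai :=
    { hFL := hFmulL
      hFR := hFmulR
      φ1 := hφ1
      φF := hφF
      φ'A := hφ'A
      φ'F := hφ'F
      qF := hqF
      q2 := hq2
      AC := fun x hx => Algebra.subset_adjoin (Or.inl hx)
      qC := Algebra.subset_adjoin (Or.inr rfl)
      NF := fun z hz => hz.1
      NΦ := fun z hz => by simpa using hz.2 1 C.one_mem 1 C.one_mem
      NL := fun c hc z hz => ⟨hFmulL _ _ hz.1, fun u hu v hv => by
        simpa only [mul_assoc] using hz.2 (u * c) (C.mul_mem hu hc) v hv⟩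
      NR := fun c hc z hz => ⟨hFmulR _ _ hz.1, fun u hu v hv => by
        simpa only [mul_assoc] using hz.2 u hu (c * v) (C.mul_mem hc hv)⟩
      Nq := fun a ha => ⟨F.sub_mem (hFmulL _ _ hqF) (F.smul_mem _ hqF), fun u hu v hv =>
        cam_reduce A φ Φ q hq2 hΦq hcamq a ha u v hu hv⟩
      Φq := fun a ha b hb => by
        simpa [mul_assoc] using cam_list A φ Φ q hq2 hΦq hcamq a b [] ha hb (by simp)
      AiA := hAi
      free := hfree }
  have hbp : ∀ {n : ℕ} (g : Fin n → Letter ι B) (b : Fin n → B), (∀ k, (g k).b = b k) →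
      (List.ofFn b).prod = bprod (List.ofFn g) := by
    intro n g b h
    rw [bprod, List.map_ofFn]
    congr 2
    funext k
    exact (h k).symm
  refine ⟨?_, ?_, ?_⟩
  · intro n idx b hidx hb h0
    obtain ⟨g, hgi, hgb, hg⟩ := H.letters idx b hb h0
    rw [hbp g b hgb]
    exact H.φ_zero g (alt_ofFn g idx hgi hidx) hg
  · intro n idx b hidx hb h0 hnot
    obtain ⟨g, hgi, hgb, hg⟩ := H.letters idx b hb h0
    have halt := alt_ofFn g idx hgi hidx
    show φ _ + φ' _ = 0
    rw [hbp g b hgb, H.φ_zero g halt hg, H.φ'_eq g halt hg, zero_add]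
    by_cases hev : Even n
    · obtain ⟨m, rfl⟩ : ∃ m, n = 2 * m := ⟨n / 2, by rw [Nat.even_iff] at hev; omega⟩
      rw [split_mid]
      have : ∃ j : Fin m, idx ⟨j, by omega⟩ ≠ idx ⟨2 * m - j, by omega⟩ := by
        by_contra! hall
        refine hnot ⟨hev, fun k => ?_⟩
        rcases lt_trichotomy k.1 m with hk | hk | hk
        · have := hall ⟨k.1, hk⟩
          convert this using 2
          ext
          simp [Fin.val_rev]
        · congr 1
          ext
          simp [Fin.val_rev]
          omega
        · have := hall ⟨2 * m - k.1, by omega⟩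
          rw [eq_comm]
          convert this using 2
          · ext
            simp [Fin.val_rev]
          · ext
            simp
            omega
      obtain ⟨j, hj⟩ := this
      rw [Finset.prod_eq_zero (Finset.mem_univ j), mul_zero]
      rw [hgi, hgi, if_neg hj]
    · apply Ssum_zero
      right
      simp [Nat.even_iff] at hev ⊢
      omega
  · intro m idx b hidx hb h0 hrev
    obtain ⟨g, hgi, hgb, hg⟩ := H.letters idx b hb h0
    have halt := alt_ofFn g idx hgi hidx
    show φ _ + φ' _ = _ * (φ _ + φ' _)
    rw [hbp g b hgb, H.φ_zero g halt hg, H.φ'_eq g halt hg, zero_add, split_mid, h0, zero_add,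
      ← hgb, H.φ'b _ (hg _), mul_comm]
    congr 1
    refine Finset.prod_congr rfl fun j _ => ?_
    have er : (Fin.castLE (by omega) j : Fin (2 * m + 1)).rev = ⟨2 * m - j, by omega⟩ := by
      ext
      simp [Fin.val_rev]
    have ec : (Fin.castLE (by omega) j : Fin (2 * m + 1)) = ⟨j, by omega⟩ := rfl
    rw [er, ec, hgi, hgi, if_pos, ← hgb, ← hgb]
    · have h1 := H.φb1 _ (hg ⟨j, by omega⟩)
      have h2 := H.φb1 _ (hg ⟨2 * m - j, by omega⟩)
      have h3 := hφF _ (F.add_mem (hFmulL (g ⟨j, by omega⟩).b _ h2)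
        (hFmulR (g ⟨2 * m - j, by omega⟩).a _ h1))
      rw [mul_sub, sub_mul, sub_add_sub_cancel, map_sub, sub_eq_zero] at h3
      exact h3.symm
    · have := hrev ⟨j, by omega⟩
      convert this using 2
      ext
      simp [Fin.val_rev]

end TypeBPrime
end

section
/- Let a₁, a₂ ∈ A be such that the unital subalgebras of A generated by a₁ and by a₂ are free with respect to φ. Then φ′((p a₁ a₂ p)ⁿ) = φ′((p a₁ p a₂ p)ⁿ) for every n ≥ 1. Consequently, the infinitesimal distributions of p a₁ a₂ p and of p a₁ p a₂ p with respect to (φ, φ + φ′) coincide; this expresses the free multiplicative convolution identity (μ₁, μ₁ − τ₁) ⊠ (μ₂, μ₂ − τ₂) = (μ, μ − τ), where μ = μ₁ ⊠ μ₂ and τ, τᵢ are the inverse Markov–Krein transforms of μ, μᵢ. -/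
open scoped BigOperators

namespace TypeBPrime

variable {B : Type*} [Ring B] [Algebra ℂ B]

set_option linter.unusedSectionVars false
set_option linter.unusedSimpArgs false

/-! ### Alternating centered words -/

/-- Alternating centered words with given first and last colour, built from the left. -/
inductive AW {B : Type*} [Ring B] [Algebra ℂ B] (φ : B →ₗ[ℂ] ℂ)
    (Alg : Bool → Subalgebra ℂ B) : Bool → Bool → B → Prop
  | single (i : Bool) (x : B) (hx : x ∈ Alg i) (h0 : φ x = 0) : AW φ Alg i i x
  | cons (i j : Bool) (x w : B) (hx : x ∈ Alg i) (h0 : φ x = 0) (hw : AW φ Alg (!i) j w) :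
      AW φ Alg i j (x * w)

/-- Alternating centered words, built from the right. -/
inductive AWr {B : Type*} [Ring B] [Algebra ℂ B] (φ : B →ₗ[ℂ] ℂ)
    (Alg : Bool → Subalgebra ℂ B) : Bool → Bool → B → Prop
  | single (i : Bool) (x : B) (hx : x ∈ Alg i) (h0 : φ x = 0) : AWr φ Alg i i x
  | snoc (i j : Bool) (x w : B) (hx : x ∈ Alg j) (h0 : φ x = 0) (hw : AWr φ Alg i (!j) w) :
      AWr φ Alg i j (w * x)

section words
variable {B : Type*} [Ring B] [Algebra ℂ B] {φ : B →ₗ[ℂ] ℂ} {Alg : Bool → Subalgebra ℂ B}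

theorem AW.snoc {i k : Bool} {w : B} (h : AW φ Alg i k w) :
    ∀ j x, k = (!j) → x ∈ Alg j → φ x = 0 → AW φ Alg i j (w * x) := by
  induction h with
  | single i y hy hy0 =>
    intro j x hk hx h0
    subst hk
    exact AW.cons _ _ _ _ hy hy0 (by simpa using AW.single j x hx h0)
  | cons i k y w hy hy0 hw ih =>
    intro j x hk hx h0
    rw [mul_assoc]
    exact AW.cons _ _ _ _ hy hy0 (ih j x hk hx h0)

theorem AWr.cons {k j : Bool} {w : B} (h : AWr φ Alg k j w) :
    ∀ i x, k = (!i) → x ∈ Alg i → φ x = 0 → AWr φ Alg i j (x * w) := by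
  induction h with
  | single y hy hy0 =>
    intro i x hk hx h0
    subst hk
    exact AWr.snoc _ _ _ _ hy hy0 (by simpa using AWr.single i x hx h0)
  | snoc j y w hy hy0 hw ih =>
    intro i x hk hx h0
    rw [← mul_assoc]
    exact AWr.snoc _ _ _ _ hy hy0 (ih i x hk hx h0)

theorem AW.toAWr {i j : Bool} {w : B} (h : AW φ Alg i j w) : AWr φ Alg i j w := by
  induction h with
  | single i y hy hy0 => exact AWr.single i y hy hy0
  | cons i k y w hy hy0 hw ih => exact ih.cons i y rfl hy hy0

theorem AWr.toAW {i j : Bool} {w : B} (h : AWr φ Alg i j w) : AW φ Alg i j w := by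
  induction h with
  | single y hy hy0 => exact AW.single _ y hy hy0
  | snoc k y w hy hy0 hw ih => exact ih.snoc k y rfl hy hy0

theorem AW.unpack {i j : Bool} {w : B} (h : AW φ Alg i j w) :
    ∃ (n : ℕ) (idx : Fin (n + 1) → Bool) (a : Fin (n + 1) → B), idx 0 = i ∧
    (∀ k : Fin n, idx k.castSucc ≠ idx k.succ) ∧
    (∀ k, a k ∈ Alg (idx k)) ∧ (∀ k, φ (a k) = 0) ∧ w = (List.ofFn a).prod := by
  induction h with
  | single i y hy hy0 =>
    exact ⟨0, fun _ => i, fun _ => y, rfl, fun k => k.elim0, fun _ => hy, fun _ => hy0, by simp⟩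
  | cons i k y w hy hy0 hw ih =>
    obtain ⟨n, idx, a, h1, h2, h3, h4, h5⟩ := ih
    refine ⟨n + 1, Fin.cons i idx, Fin.cons y a, rfl, ?_, ?_, ?_, ?_⟩
    · intro k
      refine Fin.cases ?_ (fun k => ?_) k
      · simp [h1]
      · rw [← Fin.succ_castSucc]
        simpa using h2 k
    · intro k
      refine Fin.cases ?_ (fun k => ?_) k
      · simpa using hy
      · simpa using h3 k
    · intro k
      refine Fin.cases ?_ (fun k => ?_) k
      · simpa using hy0
      · simpa using h4 k
    · rw [List.ofFn_succ]
      simp [h5]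

theorem AW.zero (hfree : IsFreeFamily ⇑φ (fun i => (Alg i : Set B))) {i j : Bool} {w : B}
    (h : AW φ Alg i j w) : φ w = 0 := by
  obtain ⟨n, idx, a, -, h2, h3, h4, h5⟩ := h.unpack
  rw [h5]
  exact hfree n idx a h2 h3 h4

theorem center_mem (hφ1 : φ 1 = 1) {i : Bool} {x : B} (hx : x ∈ Alg i) :
    (x - φ x • (1 : B)) ∈ Alg i ∧ φ (x - φ x • (1 : B)) = 0 :=
  ⟨(Alg i).sub_mem hx ((Alg i).smul_mem (Alg i).one_mem _), by simp [hφ1]⟩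

/-- Left multiplication of a word by an element of a different colour. -/
theorem AW.mul_ne (hφ1 : φ 1 = 1) {i j : Bool} {w : B} (h : AW φ Alg i j w) {x : B}
    (hx : x ∈ Alg (!i)) : ∃ w', AW φ Alg (!i) j w' ∧ x * w = w' + φ x • w := by
  refine ⟨(x - φ x • (1 : B)) * w, AW.cons _ _ _ _ (center_mem hφ1 hx).1 (center_mem hφ1 hx).2
    (by simpa using h), by simp [sub_mul]⟩

/-- The span of words with last colour `j`. -/
def LW (φ : B →ₗ[ℂ] ℂ) (Alg : Bool → Subalgebra ℂ B) (j : Bool) : Submodule ℂ B :=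
  Submodule.span ℂ {w | ∃ i, AW φ Alg i j w}

theorem LW_zero (hfree : IsFreeFamily ⇑φ (fun i => (Alg i : Set B))) {j : Bool} {w : B}
    (h : w ∈ LW φ Alg j) : φ w = 0 := by
  induction h using Submodule.span_induction with
  | mem x hx => obtain ⟨i, hi⟩ := hx; exact hi.zero hfree
  | zero => simp
  | add x y _ _ hx hy => simp [hx, hy]
  | smul c x _ hx => simp [hx]

/-- Left multiplication of a word by an element. -/
theorem AW.mul_left (hφ1 : φ 1 = 1) {i j : Bool} {w : B} (h : AW φ Alg i j w) {k : Bool} {x : B}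
    (hx : x ∈ Alg k) : x * w ∈ LW φ Alg j ∨
      (k = j ∧ w ∈ Alg j ∧ φ w = 0 ∧ x * w - φ (x * w) • (1 : B) ∈ LW φ Alg j) := by
  by_cases hki : k = !i
  · subst hki
    obtain ⟨w', h1, h2⟩ := h.mul_ne hφ1 hx
    left
    rw [h2]
    exact Submodule.add_mem _ (Submodule.subset_span ⟨_, h1⟩)
      (Submodule.smul_mem _ _ (Submodule.subset_span ⟨_, h⟩))
  · have hki : k = i := by cases k <;> cases i <;> simp_all
    subst hki
    cases h with
    | single _ _ hy hy0 =>
      right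
      have := center_mem hφ1 ((Alg _).mul_mem hx hy)
      exact ⟨rfl, hy, hy0, Submodule.subset_span ⟨_, AW.single _ _ this.1 this.2⟩⟩
    | cons _ _ y w hy hy0 hw =>
      left
      have := center_mem hφ1 ((Alg _).mul_mem hx hy)
      have h2 : x * (y * w) = (x * y - φ (x * y) • (1 : B)) * w + φ (x * y) • w := by
        simp [sub_mul, mul_assoc]
      rw [h2]
      exact Submodule.add_mem _ (Submodule.subset_span ⟨_, AW.cons _ _ _ _ this.1 this.2 hw⟩)
        (Submodule.smul_mem _ _ (Submodule.subset_span ⟨_, hw⟩))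

theorem LW_mul (hφ1 : φ 1 = 1) (hfree : IsFreeFamily ⇑φ (fun i => (Alg i : Set B)))
    {j k : Bool} {w x : B} (h : w ∈ LW φ Alg j) (hx : x ∈ Alg k) :
    x * w - φ (x * w) • (1 : B) ∈ LW φ Alg j ∧ (k ≠ j → φ (x * w) = 0) := by
  induction h using Submodule.span_induction with
  | mem w hw =>
    obtain ⟨i, hi⟩ := hw
    rcases hi.mul_left hφ1 hx with h | ⟨h1, -, -, h2⟩
    · have h0 := LW_zero hfree h
      exact ⟨by simpa [h0] using h, fun _ => h0⟩
    · exact ⟨h2, fun h => (h h1).elim⟩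
  | zero => simp
  | add y z _ _ hy hz =>
    refine ⟨?_, fun h => by simp [mul_add, hy.2 h, hz.2 h]⟩
    have := Submodule.add_mem _ hy.1 hz.1
    convert this using 1
    simp only [mul_add, map_add, add_smul]
    abel
  | smul c y _ hy =>
    refine ⟨?_, fun h => by simp [hy.2 h]⟩
    have := Submodule.smul_mem _ c hy.1
    convert this using 1
    simp [smul_sub, smul_smul]

theorem AW.left_zero (hφ1 : φ 1 = 1) (hfree : IsFreeFamily ⇑φ (fun i => (Alg i : Set B)))
    {i j : Bool} {w : B} (h : AW φ Alg i j w) :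
    (∃ l, w ∈ Alg l ∧ φ w = 0) ∨ ∀ k, ∀ x ∈ Alg k, φ (x * w) = 0 := by
  by_cases hs : ∃ l, w ∈ Alg l ∧ φ w = 0
  · exact Or.inl hs
  · right
    intro k x hx
    rcases h.mul_left hφ1 hx with h | ⟨-, h1, h2, -⟩
    · exact LW_zero hfree h
    · exact (hs ⟨_, h1, h2⟩).elim

theorem AWr.right_zero (hφ1 : φ 1 = 1) (hfree : IsFreeFamily ⇑φ (fun i => (Alg i : Set B)))
    {i j : Bool} {w : B} (h : AWr φ Alg i j w) :
    (∃ l, w ∈ Alg l ∧ φ w = 0) ∨ ∀ k, ∀ x ∈ Alg k, φ (w * x) = 0 := by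
  by_cases hs : ∃ l, w ∈ Alg l ∧ φ w = 0
  · exact Or.inl hs
  · right
    intro k x hx
    by_cases hkj : k = !j
    · subst hkj
      have h1 : AWr φ Alg i (!j) (w * (x - φ x • (1 : B))) :=
        AWr.snoc _ _ _ _ (center_mem hφ1 hx).1 (center_mem hφ1 hx).2 (by simpa using h)
      have h2 := h1.toAW.zero hfree
      have h3 := h.toAW.zero hfree
      simpa [mul_sub, h3] using h2
    · have hkj : k = j := by cases k <;> cases j <;> simp_all
      subst hkj
      cases h with
      | single _ hy hy0 => exact (hs ⟨_, hy, hy0⟩).elim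
      | snoc _ y w hy hy0 hw =>
        have hc := center_mem hφ1 ((Alg k).mul_mem hy hx)
        have h1 : AWr φ Alg i k (w * (y * x - φ (y * x) • (1 : B))) :=
          AWr.snoc _ _ _ _ hc.1 hc.2 hw
        have h2 := h1.toAW.zero hfree
        have h3 := hw.toAW.zero hfree
        simpa [mul_sub, h3, mul_assoc] using h2

theorem single_comm (hφ1 : φ 1 = 1) (hfree : IsFreeFamily ⇑φ (fun i => (Alg i : Set B)))
    (hcomm : ∀ i, ∀ x ∈ Alg i, ∀ y ∈ Alg i, x * y = y * x)
    {l k : Bool} {w x : B} (hw : w ∈ Alg l) (hw0 : φ w = 0) (hx : x ∈ Alg k) :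
    φ (x * w) = φ (w * x) := by
  by_cases hkl : k = l
  · subst hkl
    rw [hcomm _ _ hx _ hw]
  · have hkl : k = !l := by cases k <;> cases l <;> simp_all
    subst hkl
    have hc := center_mem hφ1 hx
    have h1 := (AW.cons (!l) l _ _ hc.1 hc.2 (by simpa using AW.single l w hw hw0)).zero hfree
    have h2 := (AW.cons l (!l) _ _ hw hw0 (AW.single (!l) _ hc.1 hc.2)).zero hfree
    simp [sub_mul, mul_sub, hw0] at h1 h2
    rw [h1, h2]

/-- The span of `1` and all words. -/
def NW (φ : B →ₗ[ℂ] ℂ) (Alg : Bool → Subalgebra ℂ B) : Submodule ℂ B :=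
  Submodule.span ℂ ({1} ∪ {w | ∃ i j, AW φ Alg i j w})

theorem LW_le_NW (j : Bool) : LW φ Alg j ≤ NW φ Alg := by
  apply Submodule.span_mono
  rintro w ⟨i, hi⟩
  exact Or.inr ⟨i, j, hi⟩

theorem NW_mul (hφ1 : φ 1 = 1) {k : Bool} {w x : B} (h : w ∈ NW φ Alg) (hx : x ∈ Alg k) :
    x * w ∈ NW φ Alg := by
  have h1 : (1 : B) ∈ NW φ Alg := Submodule.subset_span (Or.inl rfl)
  induction h using Submodule.span_induction with
  | mem w hw =>
    rcases hw with hw | ⟨i, j, hw⟩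
    · rw [Set.mem_singleton_iff] at hw
      subst hw
      have hc := center_mem hφ1 hx
      have h2 : x * 1 = (x - φ x • (1 : B)) + φ x • (1 : B) := by simp
      rw [h2]
      exact Submodule.add_mem _ (Submodule.subset_span (Or.inr ⟨_, _, AW.single _ _ hc.1 hc.2⟩))
        (Submodule.smul_mem _ _ h1)
    · rcases hw.mul_left hφ1 hx with h | ⟨-, -, -, h2⟩
      · exact LW_le_NW _ h
      · have h3 := Submodule.add_mem _ (LW_le_NW _ h2) (Submodule.smul_mem _ (φ (x * w)) h1)
        simpa using h3
  | zero => simp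
  | add y z _ _ hy hz => rw [mul_add]; exact Submodule.add_mem _ hy hz
  | smul c y _ hy => rw [mul_smul_comm]; exact Submodule.smul_mem _ _ hy

theorem NW_comm (hφ1 : φ 1 = 1) (hfree : IsFreeFamily ⇑φ (fun i => (Alg i : Set B)))
    (hcomm : ∀ i, ∀ x ∈ Alg i, ∀ y ∈ Alg i, x * y = y * x)
    {k : Bool} {w x : B} (h : w ∈ NW φ Alg) (hx : x ∈ Alg k) : φ (x * w) = φ (w * x) := by
  induction h using Submodule.span_induction with
  | mem w hw =>
    rcases hw with hw | ⟨i, j, hw⟩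
    · rw [Set.mem_singleton_iff] at hw
      subst hw
      simp
    · rcases hw.left_zero hφ1 hfree with ⟨l, h1, h2⟩ | h
      · exact single_comm hφ1 hfree hcomm h1 h2 hx
      · rcases hw.toAWr.right_zero hφ1 hfree with ⟨l, h1, h2⟩ | h'
        · exact single_comm hφ1 hfree hcomm h1 h2 hx
        · rw [h k x hx, h' k x hx]
  | zero => simp
  | add y z _ _ hy hz => simp [mul_add, add_mul, hy, hz]
  | smul c y _ hy => simp [hy]

theorem closure_comm (hφ1 : φ 1 = 1) (hfree : IsFreeFamily ⇑φ (fun i => (Alg i : Set B)))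
    (hcomm : ∀ i, ∀ x ∈ Alg i, ∀ y ∈ Alg i, x * y = y * x)
    {x y : B} (hx : x ∈ Submonoid.closure {z | ∃ i, z ∈ Alg i})
    (hy : y ∈ Submonoid.closure {z | ∃ i, z ∈ Alg i}) : φ (x * y) = φ (y * x) := by
  have hN : ∀ z ∈ Submonoid.closure {z | ∃ i, z ∈ Alg i}, z ∈ NW φ Alg := by
    intro z hz
    induction hz using Submonoid.closure_induction_left with
    | one => exact Submodule.subset_span (Or.inl rfl)
    | mul_left b hb z _ ih =>
      obtain ⟨i, hi⟩ := hb
      exact NW_mul hφ1 ih hi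
  induction hx using Submonoid.closure_induction_left generalizing y with
  | one => simp
  | mul_left b hb x hx ih =>
    obtain ⟨i, hi⟩ := hb
    rw [mul_assoc, NW_comm hφ1 hfree hcomm (hN _ (mul_mem hx hy)) hi, mul_assoc,
      ih (mul_mem hy (Submonoid.subset_closure ⟨i, hi⟩)), mul_assoc]

/-! ### Boolean cumulants -/

/-- `R [b₁,…,bₘ] = P b₁ P b₂ ⋯ P bₘ 1` with `P x = x - φ x`. -/
def Rw (φ : B →ₗ[ℂ] ℂ) : List B → B
  | [] => 1
  | b :: l => b * Rw φ l - φ (b * Rw φ l) • (1 : B)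

/-- Alternating list. -/
def altL (a b : B) : ℕ → List B
  | 0 => []
  | k + 1 => a :: altL b a k

theorem altL_length (a b : B) (k : ℕ) : (altL a b k).length = k := by
  induction k generalizing a b with
  | zero => rfl
  | succ k ih => simp [altL, ih]

theorem altL_mem (a b : B) (k : ℕ) : ∀ x ∈ altL a b k, x = a ∨ x = b := by
  induction k generalizing a b with
  | zero => simp [altL]
  | succ k ih =>
    intro x hx
    rcases List.mem_cons.1 hx with h | h
    · exact Or.inl h
    · exact (ih b a x h).symm

theorem altL_take (a b : B) (j k : ℕ) (h : j ≤ k) : (altL a b k).take j = altL a b j := by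
  induction k generalizing a b j with
  | zero => obtain rfl : j = 0 := by omega
            rfl
  | succ k ih =>
    cases j with
    | zero => rfl
    | succ j => simp [altL, ih b a j (by omega)]

theorem altL_drop_even (a b : B) (j k : ℕ) : (altL a b (2 * j + k)).drop (2 * j) = altL a b k := by
  induction j with
  | zero => simp
  | succ j ih =>
    rw [show 2 * (j + 1) + k = (2 * j + k) + 1 + 1 by ring, show 2 * (j + 1) = 2 * j + 1 + 1 by ring]
    simpa [altL] using ih

theorem altL_prod_even (a b : B) (k : ℕ) : (altL a b (2 * k)).prod = (a * b) ^ k := by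
  induction k with
  | zero => simp [altL]
  | succ k ih =>
    rw [show 2 * (k + 1) = 2 * k + 1 + 1 by ring]
    simp [altL, ih, pow_succ', mul_assoc]

theorem altL_prod_odd (a b : B) (k : ℕ) : (altL a b (2 * k + 1)).prod = a * (b * a) ^ k := by
  simp [altL, altL_prod_even]

/-- Words ending in colour `j` give elements of `LW j`. -/
theorem Rw_altL (hφ1 : φ 1 = 1) (hfree : IsFreeFamily ⇑φ (fun i => (Alg i : Set B)))
    (k : ℕ) (i : Bool) (a b : B) (ha : a ∈ Alg i) (hb : b ∈ Alg (!i)) :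
    Rw φ (altL a b (2 * k + 1)) ∈ LW φ Alg i := by
  induction k with
  | zero =>
    have hc := center_mem hφ1 ha
    have h1 : a - φ a • (1 : B) ∈ LW φ Alg i :=
      Submodule.subset_span ⟨i, AW.single _ _ hc.1 hc.2⟩
    simpa [altL, Rw] using h1
  | succ k ih =>
    rw [show 2 * (k + 1) + 1 = (2 * k + 1) + 1 + 1 by ring]
    exact (LW_mul hφ1 hfree (LW_mul hφ1 hfree ih hb).1 ha).1

theorem bool_vanish (hφ1 : φ 1 = 1) (hfree : IsFreeFamily ⇑φ (fun i => (Alg i : Set B)))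
    (k : ℕ) (i : Bool) (a b : B) (ha : a ∈ Alg i) (hb : b ∈ Alg (!i)) :
    φ (b * Rw φ (altL a b (2 * k + 1))) = 0 :=
  (LW_mul hφ1 hfree (Rw_altL hφ1 hfree k i a b ha hb) hb).2 (by simp)

theorem moment_expand (hφ1 : φ 1 = 1) (l : List B) :
    l.prod = ∑ j ∈ Finset.range (l.length + 1), φ (l.drop j).prod • Rw φ (l.take j) := by
  induction l with
  | nil => simp [Rw, hφ1]
  | cons b l ih =>
    rw [List.length_cons, Finset.sum_range_succ']
    simp only [List.drop_succ_cons, List.take_succ_cons, Rw, smul_sub, Finset.sum_sub_distrib,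
      List.drop_zero, List.take_zero]
    have h1 : b * l.prod = ∑ j ∈ Finset.range (l.length + 1),
        φ (l.drop j).prod • (b * Rw φ (l.take j)) := by
      conv_lhs => rw [ih]
      simp [Finset.mul_sum]
    have h2 : φ (b * l.prod) = ∑ j ∈ Finset.range (l.length + 1),
        φ (l.drop j).prod * φ (b * Rw φ (l.take j)) := by
      rw [h1]; simp
    rw [List.prod_cons, h2, ← h1, Finset.sum_smul]
    simp [smul_smul]

theorem moment_expand' (hφ1 : φ 1 = 1) (c : B) (l : List B) :
    φ (c * l.prod) = ∑ j ∈ Finset.range (l.length + 1),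
      φ (l.drop j).prod * φ (c * Rw φ (l.take j)) := by
  conv_lhs => rw [moment_expand hφ1 l]
  simp [Finset.mul_sum]

end words

/-! ### The compression side -/

section compress
variable {B : Type*} [Ring B] [Algebra ℂ B]

/-- `p b₁ p b₂ ⋯ p bₘ p`. -/
def Yw (q : B) : List B → B
  | [] => 1 - q
  | b :: l => (1 - q) * b * Yw q l

theorem prod_Ioo_fin (n : ℕ) (g : Fin (n + 2) → ℂ) :
    ∏ k ∈ Finset.Ioo (0 : Fin (n + 2)) (Fin.last (n + 1)), g k =
      ∏ k : Fin n, g k.castSucc.succ := by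
  symm
  refine Finset.prod_bij (fun k _ => k.castSucc.succ) ?_ ?_ ?_ ?_
  · intro k _
    simp [Fin.lt_def]
  · intro a _ b _ h
    simpa using h
  · intro b hb
    simp only [Finset.mem_Ioo, Fin.lt_def, Fin.val_last, Fin.val_zero] at hb
    refine ⟨⟨b.val - 1, by omega⟩, Finset.mem_univ _, ?_⟩
    ext
    simp
    omega
  · intro _ _; rfl

theorem altWord_cons (q x : B) {n : ℕ} (a : Fin (n + 1) → B) :
    altWord (Fin.cons x a : Fin (n + 2) → B) (fun _ => q) = x * q * altWord a (fun _ => q) := by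
  simp [altWord, List.ofFn_succ, mul_assoc]

theorem pow_idem {q : B} (hq2 : q * q = q) (n : ℕ) :
    (List.ofFn (fun _ : Fin (n + 1) => q)).prod = q := by
  induction n with
  | zero => simp
  | succ n ih => rw [List.ofFn_succ, List.prod_cons, ih, hq2]

variable {A : Subalgebra ℂ B} {φ Φ : B →ₗ[ℂ] ℂ} {q : B}

theorem cam_word (hq2 : q * q = q) (hΦq : Φ q = 1)
    (hcamq : CyclicAntimonotone ⇑φ ⇑Φ (A : Set B) {x | ∃ c : ℂ, x = c • q})
    {n : ℕ} (a : Fin (n + 1) → B) (ha : ∀ k, a k ∈ A) (x : B) (hx : x ∈ A) :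
    Φ (x * q * altWord a (fun _ => q)) =
      φ (x * a (Fin.last n)) * ∏ k : Fin n, φ (a k.castSucc) := by
  rw [← altWord_cons]
  rw [hcamq (n + 1) (by omega) (Fin.cons x a) (fun _ => q) ?_ (fun _ => ⟨1, by simp⟩)]
  · rw [prod_Ioo_fin, pow_idem hq2, hΦq, ← Fin.succ_last]
    simp
  · intro k
    refine Fin.cases ?_ (fun k => ?_) k
    · simpa using hx
    · simpa using ha k

/-- The span of words in `A` and `q`. -/
def SW (A : Subalgebra ℂ B) (q : B) : Submodule ℂ B :=
  Submodule.span ℂ {z | ∃ (n : ℕ) (a : Fin (n + 1) → B), (∀ k, a k ∈ A) ∧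
    z = altWord a (fun _ => q)}

theorem cam_step (hq2 : q * q = q) (hΦq : Φ q = 1)
    (hcamq : CyclicAntimonotone ⇑φ ⇑Φ (A : Set B) {x | ∃ c : ℂ, x = c • q})
    {x c z : B} (hx : x ∈ A) (hc : c ∈ A) (hz : z ∈ SW A q) :
    Φ (x * q * (c * q * z)) = φ c * Φ (x * q * z) := by
  induction hz using Submodule.span_induction with
  | mem z hz =>
    obtain ⟨n, a, ha, rfl⟩ := hz
    rw [← altWord_cons, cam_word hq2 hΦq hcamq a ha x hx, cam_word hq2 hΦq hcamq _ ?_ x hx]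
    · rw [Fin.prod_univ_succ, ← Fin.succ_last]
      simp
      ring
    · intro k
      refine Fin.cases ?_ (fun k => ?_) k
      · simpa using hc
      · simpa using ha k
  | zero => simp
  | add y z _ _ hy hz => simp [mul_add, hy, hz]
  | smul s y _ hy => simp [hy]; ring

theorem SW_mem {a : B} (ha : a ∈ A) : a ∈ SW A q :=
  Submodule.subset_span ⟨0, fun _ => a, fun _ => ha, by simp [altWord]⟩

theorem SW_mul {x z : B} (hx : x ∈ A) (hz : z ∈ SW A q) : x * q * z ∈ SW A q := by
  induction hz using Submodule.span_induction with
  | mem z hz =>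
    obtain ⟨n, a, ha, rfl⟩ := hz
    refine Submodule.subset_span ⟨n + 1, Fin.cons x a, ?_, (altWord_cons q x a).symm⟩
    intro k
    refine Fin.cases ?_ (fun k => ?_) k
    · simpa using hx
    · simpa using ha k
  | zero => simp
  | add y z _ _ hy hz => rw [mul_add]; exact Submodule.add_mem _ hy hz
  | smul s y _ hy => rw [mul_smul_comm]; exact Submodule.smul_mem _ _ hy

theorem Yw_cons_mul (c b : B) (l : List B) :
    c * Yw q (b :: l) = c * b * Yw q l - c * q * (b * Yw q l) := by
  simp [Yw]; noncomm_ring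

theorem Yw_mem (l : List B) (hl : ∀ b ∈ l, b ∈ A) : ∀ c ∈ A, c * Yw q l ∈ SW A q := by
  induction l with
  | nil =>
    intro c hc
    have : c * Yw q [] = c - c * q * 1 := by simp [Yw, mul_sub]
    rw [this]
    exact Submodule.sub_mem _ (SW_mem hc) (SW_mul hc (SW_mem A.one_mem))
  | cons b l ih =>
    intro c hc
    have hb := hl b (by simp)
    have ih := ih (fun b hb => hl b (by simp [hb]))
    rw [Yw_cons_mul]
    exact Submodule.sub_mem _ (ih _ (mul_mem hc hb)) (SW_mul hc (ih _ hb))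

theorem H_formula (hq2 : q * q = q) (hΦq : Φ q = 1)
    (hcamq : CyclicAntimonotone ⇑φ ⇑Φ (A : Set B) {x | ∃ c : ℂ, x = c • q})
    (l : List B) (hl : ∀ b ∈ l, b ∈ A) (x : B) (hx : x ∈ A) : ∀ c ∈ A,
    Φ (x * q * (c * Yw q l)) = φ (x * (c * l.prod)) -
      ∑ j ∈ Finset.range (l.length + 1), φ (x * (l.drop j).prod) * φ (c * Rw φ (l.take j)) := by
  have base : ∀ c ∈ A, Φ (x * q * c) = φ (x * c) := by
    intro c hc
    have := cam_word hq2 hΦq hcamq (n := 0) (fun _ => c) (fun _ => hc) x hx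
    simpa [altWord] using this
  induction l with
  | nil =>
    intro c hc
    have h1 : x * q * (c * Yw q []) = x * q * c - x * q * (c * q * 1) := by
      simp [Yw, mul_sub]
    rw [h1, map_sub, cam_step hq2 hΦq hcamq hx hc (SW_mem A.one_mem), base c hc, base 1 A.one_mem]
    simp [Rw]
    ring
  | cons b l ih =>
    intro c hc
    have hb := hl b (by simp)
    have hl' : ∀ b ∈ l, b ∈ A := fun b hb => hl b (by simp [hb])
    have ih := ih hl'
    rw [Yw_cons_mul, mul_sub, map_sub, cam_step hq2 hΦq hcamq hx hc (Yw_mem l hl' b hb),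
      ih _ (mul_mem hc hb), ih _ hb, List.length_cons, Finset.sum_range_succ' _ (l.length + 1)]
    simp only [List.drop_succ_cons, List.take_succ_cons, Rw, List.drop_zero, List.take_zero,
      List.prod_cons, mul_sub, map_sub, Finset.sum_sub_distrib, mul_one, mul_smul_comm, map_smul,
      smul_eq_mul, mul_assoc, Finset.mul_sum]
    have : ∀ j, φ (x * (l.drop j).prod) * (φ (b * Rw φ (l.take j)) * φ c) =
        φ c * (φ (x * (l.drop j).prod) * φ (b * Rw φ (l.take j))) := fun j => by ring
    simp only [this]
    ring

end compress

/-! ### Sums and power series -/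

theorem sum_parity (f : ℕ → ℂ) (r : ℕ) :
    ∑ j ∈ Finset.range (2 * r + 1), f j =
      ∑ t ∈ Finset.range (r + 1), f (2 * t) + ∑ t ∈ Finset.range r, f (2 * t + 1) := by
  induction r with
  | zero => simp
  | succ r ih =>
    rw [show 2 * (r + 1) + 1 = (2 * r + 1) + 1 + 1 by ring, Finset.sum_range_succ,
      Finset.sum_range_succ, ih, Finset.sum_range_succ _ (r + 1),
      Finset.sum_range_succ (fun t => f (2 * t + 1)) r]
    rw [show 2 * (r + 1) = 2 * r + 1 + 1 by ring]
    ring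

theorem sum_triangle (f : ℕ → ℂ) (n : ℕ) :
    ∑ s ∈ Finset.range n, ∑ l ∈ Finset.range (n - s), f l =
      ∑ l ∈ Finset.range n, ((n : ℂ) - l) * f l := by
  induction n with
  | zero => simp
  | succ n ih =>
    rw [Finset.sum_range_succ']
    simp only [Nat.add_sub_add_right, Nat.sub_zero]
    rw [ih, Finset.sum_range_succ f, Finset.sum_range_succ (fun l => _ * f l), ← add_assoc,
      ← Finset.sum_add_distrib]
    congr 1
    · refine Finset.sum_congr rfl fun l _ => ?_
      push_cast
      ring
    · push_cast
      ring

open PowerSeries in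
theorem series_core (m u v x1 x2 e : ℕ → ℂ) (hm0 : m 0 = 1)
    (F1 : ∀ r, m (r + 1) = ∑ t ∈ Finset.range (r + 1), u (r - t) * x1 t)
    (F2 : ∀ r, u r = ∑ t ∈ Finset.range (r + 1), m (r - t) * x2 t)
    (F3 : ∀ r, v r = ∑ t ∈ Finset.range (r + 1), m (r - t) * x1 t)
    (F4 : ∀ r, m (r + 1) = ∑ t ∈ Finset.range (r + 1), m (r - t) * e t) (n : ℕ) :
    ∑ l ∈ Finset.range (n + 1), (((n + 1 : ℕ) : ℂ) - l) * (u (n - l) * x1 l) +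
    ∑ l ∈ Finset.range (n + 1), (((n + 1 : ℕ) : ℂ) - l) * (v (n - l) * x2 l) -
      ((n + 1 : ℕ) : ℂ) * m (n + 1) =
    ∑ l ∈ Finset.range (n + 1), (((n + 1 : ℕ) : ℂ) - l) * (m (n - l) * e l) := by
  have conv : ∀ f g : ℕ → ℂ, ∀ r, coeff r (mk f * mk g) =
      ∑ t ∈ Finset.range (r + 1), f (r - t) * g t := by
    intro f g r
    rw [mul_comm, coeff_mul, Finset.Nat.sum_antidiagonal_eq_sum_range_succ_mk]
    simp [mul_comm]
  have G2 : mk u = mk m * mk x2 := by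
    ext r; rw [conv, coeff_mk, F2]
  have G3 : mk v = mk m * mk x1 := by
    ext r; rw [conv, coeff_mk, F3]
  have G1 : mk m = 1 + X * (mk u * mk x1) := by
    ext r
    cases r with
    | zero => simp [hm0]
    | succ r => rw [map_add, coeff_succ_X_mul, conv, coeff_mk, F1]; simp [coeff_one]
  have G4 : mk m = 1 + X * (mk m * mk e) := by
    ext r
    cases r with
    | zero => simp [hm0]
    | succ r => rw [map_add, coeff_succ_X_mul, conv, coeff_mk, F4]; simp [coeff_one]
  have hm : (mk m : PowerSeries ℂ) ≠ 0 := by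
    intro h
    have := congrArg (coeff 0) h
    simp [hm0] at this
  have G5 : (mk e : PowerSeries ℂ) = mk x1 * mk x2 := by
    have h1 : X * (mk m * mk e) = X * (mk m * (mk x1 * mk x2)) := by
      have := G4.symm.trans G1
      rw [G2] at this
      linear_combination this
    exact mul_left_cancel₀ hm (mul_left_cancel₀ X_ne_zero h1)
  have dconv : ∀ f g : ℕ → ℂ, ∀ r, ∑ l ∈ Finset.range (r + 1),
      (((r + 1 : ℕ) : ℂ) - l) * (f (r - l) * g l) =
      coeff r (derivative ℂ (X * mk f) * mk g) := by
    intro f g r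
    have : derivative ℂ (X * mk f) = mk (fun k => ((k : ℂ) + 1) * f k) := by
      ext k
      rw [coeff_derivative, coeff_succ_X_mul, coeff_mk, coeff_mk, mul_comm]
    rw [this, conv]
    refine Finset.sum_congr rfl fun l hl => ?_
    have hl : l ≤ r := by simp at hl; omega
    push_cast [Nat.cast_sub hl]
    ring
  have dm : ((n + 1 : ℕ) : ℂ) * m (n + 1) = coeff n (derivative ℂ (mk m)) := by
    rw [coeff_derivative, coeff_mk]; push_cast; ring
  rw [dconv, dconv, dconv, dm, ← map_add, ← map_sub]
  congr 1
  have dG : derivative ℂ (mk m) = derivative ℂ (1 + X * (mk u * mk x1)) := congrArg _ G1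
  rw [dG, G5, G2, G3]
  simp only [map_add, Derivation.leibniz, smul_eq_mul, derivative_X, Derivation.map_one_eq_zero]
  ring

section final
variable {B : Type*} [Ring B] [Algebra ℂ B] {φ : B →ₗ[ℂ] ℂ} {Alg : Bool → Subalgebra ℂ B}

theorem alt_sum_odd (hφ1 : φ 1 = 1) (hfree : IsFreeFamily ⇑φ (fun i => (Alg i : Set B)))
    (i : Bool) (a b : B) (ha : a ∈ Alg i) (hb : b ∈ Alg (!i)) (g : B → ℂ) (r : ℕ) :
    ∑ j ∈ Finset.range ((altL a b (2 * r + 1)).length + 1),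
      g ((altL a b (2 * r + 1)).drop j).prod * φ (b * Rw φ ((altL a b (2 * r + 1)).take j)) =
    ∑ t ∈ Finset.range (r + 1), g (a * (b * a) ^ (r - t)) * φ (b * Rw φ (altL a b (2 * t))) := by
  rw [altL_length, Finset.sum_range_succ, sum_parity, add_assoc, ← Finset.sum_range_succ
    (fun t => g ((altL a b (2 * r + 1)).drop (2 * t + 1)).prod *
      φ (b * Rw φ ((altL a b (2 * r + 1)).take (2 * t + 1))))]
  rw [Finset.sum_eq_zero (s := Finset.range (r + 1)) (f := fun t =>
      g ((altL a b (2 * r + 1)).drop (2 * t + 1)).prod *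
      φ (b * Rw φ ((altL a b (2 * r + 1)).take (2 * t + 1)))), add_zero]
  · refine Finset.sum_congr rfl fun t ht => ?_
    have ht : t ≤ r := by simp at ht; omega
    rw [altL_take _ _ _ _ (by omega), show 2 * r + 1 = 2 * t + (2 * (r - t) + 1) by omega,
      altL_drop_even, altL_prod_odd]
  · intro t ht
    have ht : t ≤ r := by simp at ht; omega
    rw [altL_take _ _ _ _ (by omega), bool_vanish hφ1 hfree t i a b ha hb, mul_zero]

theorem alt_sum_even (hφ1 : φ 1 = 1) (hfree : IsFreeFamily ⇑φ (fun i => (Alg i : Set B)))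
    (i : Bool) (a b : B) (ha : a ∈ Alg i) (hb : b ∈ Alg (!i)) (g : B → ℂ) (r : ℕ) :
    ∑ j ∈ Finset.range ((altL a b (2 * r)).length + 1),
      g ((altL a b (2 * r)).drop j).prod * φ (b * Rw φ ((altL a b (2 * r)).take j)) =
    ∑ t ∈ Finset.range (r + 1), g ((a * b) ^ (r - t)) * φ (b * Rw φ (altL a b (2 * t))) := by
  rw [altL_length, sum_parity]
  rw [Finset.sum_eq_zero (s := Finset.range r), add_zero]
  · refine Finset.sum_congr rfl fun t ht => ?_
    have ht : t ≤ r := by simp at ht; omega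
    rw [altL_take _ _ _ _ (by omega), show 2 * r = 2 * t + (2 * (r - t)) by omega,
      altL_drop_even, altL_prod_even]
  · intro t ht
    have ht : t < r := by simpa using ht
    rw [altL_take _ _ _ _ (by omega), bool_vanish hφ1 hfree t i a b ha hb, mul_zero]

theorem rep_sum (a : B) (g : B → ℂ) (r : ℕ) :
    ∑ j ∈ Finset.range ((List.replicate r a).length + 1),
      g ((List.replicate r a).drop j).prod * φ (a * Rw φ ((List.replicate r a).take j)) =
    ∑ t ∈ Finset.range (r + 1), g (a ^ (r - t)) * φ (a * Rw φ (List.replicate t a)) := by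
  rw [List.length_replicate]
  refine Finset.sum_congr rfl fun t ht => ?_
  have ht : t ≤ r := by simp at ht; omega
  simp [List.drop_replicate, List.take_replicate, ht]

theorem pow_swap (a b : B) (k : ℕ) : (a * b) ^ k * a = a * (b * a) ^ k := by
  induction k with
  | zero => simp
  | succ k ih => rw [pow_succ', pow_succ', mul_assoc, ih]; simp only [mul_assoc]

theorem Yw_idem {q : B} (hq2 : q * q = q) (l : List B) : (1 - q) * Yw q l = Yw q l := by
  have hp : (1 - q) * (1 - q) = 1 - q := by simp [mul_sub, sub_mul, hq2]
  cases l with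
  | nil => exact hp
  | cons b l => simp only [Yw, ← mul_assoc, hp]

theorem pow_Yw_rep {q : B} (hq2 : q * q = q) (a : B) (n : ℕ) :
    ((1 - q) * a * (1 - q)) ^ n * (1 - q) = Yw q (List.replicate n a) := by
  induction n with
  | zero => simp [Yw]
  | succ n ih =>
    rw [pow_succ', mul_assoc, ih, mul_assoc, Yw_idem hq2]
    rfl

theorem pow_Yw_alt {q : B} (hq2 : q * q = q) (a b : B) (n : ℕ) :
    ((1 - q) * a * (1 - q) * b * (1 - q)) ^ n * (1 - q) = Yw q (altL a b (2 * n)) := by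
  induction n with
  | zero => simp [Yw, altL]
  | succ n ih =>
    rw [pow_succ', mul_assoc, ih, mul_assoc, Yw_idem hq2]
    simp only [show 2 * (n + 1) = 2 * n + 1 + 1 by ring, altL, Yw, mul_assoc]

theorem pow_absorb {p x : B} (hx : x * p = x) (n : ℕ) : x ^ (n + 1) * p = x ^ (n + 1) := by
  rw [pow_succ, mul_assoc, hx]

theorem D_cons {A : Subalgebra ℂ B} {F : Submodule ℂ B} {Φ φ' : B →ₗ[ℂ] ℂ} {q : B}
    (hFmulL : ∀ b : B, ∀ f ∈ F, b * f ∈ F) (hFmulR : ∀ b : B, ∀ f ∈ F, f * b ∈ F)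
    (hφ'F : ∀ f ∈ F, φ' f = Φ f) (hqF : q ∈ F) (c b : B) (l : List B) :
    φ' (c * Yw q (b :: l)) = φ' (c * b * Yw q l) - Φ (c * q * (b * Yw q l)) := by
  rw [Yw_cons_mul, map_sub, hφ'F _ (hFmulR _ _ (hFmulL _ _ hqF))]

theorem phi_Y {F : Submodule ℂ B} {q : B}
    (hFmulL : ∀ b : B, ∀ f ∈ F, b * f ∈ F) (hFmulR : ∀ b : B, ∀ f ∈ F, f * b ∈ F)
    (hφF : ∀ f ∈ F, φ f = 0) (hqF : q ∈ F) (l : List B) (c : B) :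
    φ (c * Yw q l) = φ (c * l.prod) := by
  induction l generalizing c with
  | nil => simp [Yw, mul_sub, hφF _ (hFmulL c _ hqF)]
  | cons b l ih =>
    rw [Yw_cons_mul, map_sub, hφF _ (hFmulR _ _ (hFmulL _ _ hqF)), sub_zero, ih, List.prod_cons,
      mul_assoc]

end final

theorem statement14
    {B : Type*} [Ring B] [Algebra ℂ B]
    (A : Subalgebra ℂ B) (F : Submodule ℂ B)
    (hFmulL : ∀ b : B, ∀ f ∈ F, b * f ∈ F)
    (hFmulR : ∀ b : B, ∀ f ∈ F, f * b ∈ F)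
    (hAF : ∀ x ∈ A, x ∈ F → x = 0)
    (hdec : ∀ x : B, ∃ a ∈ A, ∃ f ∈ F, x = a + f)
    (φ Φ φ' : B →ₗ[ℂ] ℂ)
    (hφ1 : φ 1 = 1) (hφF : ∀ f ∈ F, φ f = 0)
    (hφ'A : ∀ a ∈ A, φ' a = 0) (hφ'F : ∀ f ∈ F, φ' f = Φ f)
    (q : B) (hqF : q ∈ F) (hq2 : q * q = q) (hΦq : Φ q = 1)
    (hcamq : CyclicAntimonotone ⇑φ ⇑Φ (A : Set B) {x | ∃ c : ℂ, x = c • q})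
    (a₁ a₂ : B) (ha₁ : a₁ ∈ A) (ha₂ : a₂ ∈ A)
    (hfree : IsFreeFamily ⇑φ (fun i : Bool =>
      if i then (Algebra.adjoin ℂ {a₁} : Set B)
      else (Algebra.adjoin ℂ {a₂} : Set B))) :
    ∀ n : ℕ, 0 < n →
      φ (((1 - q) * (a₁ * a₂) * (1 - q)) ^ n) =
        φ (((1 - q) * a₁ * (1 - q) * a₂ * (1 - q)) ^ n) ∧
      φ' (((1 - q) * (a₁ * a₂) * (1 - q)) ^ n) =
        φ' (((1 - q) * a₁ * (1 - q) * a₂ * (1 - q)) ^ n) := by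
  intro n hn
  obtain ⟨n, rfl⟩ : ∃ k, n = k + 1 := ⟨n - 1, by omega⟩
  have hp : (1 - q) * (1 - q) = 1 - q := by simp [mul_sub, sub_mul, hq2]
  have eL : ((1 - q) * (a₁ * a₂) * (1 - q)) ^ (n + 1) =
      Yw q (List.replicate (n + 1) (a₁ * a₂)) := by
    rw [← pow_Yw_rep hq2, pow_absorb]
    rw [mul_assoc _ (1 - q), hp]
  have eR : ((1 - q) * a₁ * (1 - q) * a₂ * (1 - q)) ^ (n + 1) =
      Yw q (altL a₁ a₂ (2 * (n + 1))) := by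
    rw [← pow_Yw_alt hq2, pow_absorb]
    rw [mul_assoc _ (1 - q) (1 - q), hp]
  rw [eL, eR]
  constructor
  · have h1 := phi_Y hFmulL hFmulR hφF hqF (List.replicate (n + 1) (a₁ * a₂)) 1
    have h2 := phi_Y hFmulL hFmulR hφF hqF (altL a₁ a₂ (2 * (n + 1))) 1
    rw [one_mul] at h1 h2
    rw [h1, h2, altL_prod_even, List.prod_replicate]
  -- the two free subalgebras
  obtain ⟨Alg, hA1, hA2, hcomm, hfree'⟩ : ∃ Alg : Bool → Subalgebra ℂ B,
      a₁ ∈ Alg true ∧ a₂ ∈ Alg false ∧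
      (∀ i, ∀ x ∈ Alg i, ∀ y ∈ Alg i, x * y = y * x) ∧
      IsFreeFamily ⇑φ (fun i => (Alg i : Set B)) := by
    refine ⟨fun i => if i then Algebra.adjoin ℂ {a₁} else Algebra.adjoin ℂ {a₂}, ?_, ?_, ?_, ?_⟩
    · simp
    · simp
    · have key : ∀ a : B, ∀ x ∈ Algebra.adjoin ℂ {a}, ∀ y ∈ Algebra.adjoin ℂ {a},
          x * y = y * x := by
        intro a x hx y hy
        have := (Algebra.adjoinCommRingOfComm ℂ (s := {a}) (by simp)).mul_comm ⟨x, hx⟩ ⟨y, hy⟩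
        exact congrArg Subtype.val this
      intro i
      cases i
      · simpa using key a₂
      · simpa using key a₁
    · convert hfree using 2 with i
      cases i <;> simp
  have hK : ∀ {x y : B}, x ∈ Submonoid.closure {z | ∃ i, z ∈ Alg i} →
      y ∈ Submonoid.closure {z | ∃ i, z ∈ Alg i} → φ (x * y) = φ (y * x) :=
    fun hx hy => closure_comm hφ1 hfree' hcomm hx hy
  have k1 : a₁ ∈ Submonoid.closure {z | ∃ i, z ∈ Alg i} := Submonoid.subset_closure ⟨_, hA1⟩
  have k2 : a₂ ∈ Submonoid.closure {z | ∃ i, z ∈ Alg i} := Submonoid.subset_closure ⟨_, hA2⟩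
  have ka : ∀ s, (a₁ * a₂) ^ s ∈ Submonoid.closure {z | ∃ i, z ∈ Alg i} :=
    fun s => pow_mem (mul_mem k1 k2) s
  have hAs : ∀ s, (a₁ * a₂) ^ s ∈ A := fun s => pow_mem (mul_mem ha₁ ha₂) s
  -- trace identities
  have t1 : ∀ s t, φ ((a₁ * a₂) ^ s * (a₂ * (a₁ * a₂) ^ t)) = φ (a₂ * (a₁ * a₂) ^ (s + t)) := by
    intro s t
    rw [hK (ka s) (mul_mem k2 (ka t)), mul_assoc, ← pow_add, add_comm]
  have t2 : ∀ s t, φ ((a₁ * a₂) ^ s * a₁ * (a₁ * a₂) ^ t) = φ (a₁ * (a₂ * a₁) ^ (s + t)) := by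
    intro s t
    rw [hK (mul_mem (ka s) k1) (ka t), ← mul_assoc, ← pow_add, pow_swap, add_comm]
  have t3 : ∀ k, φ ((a₂ * a₁) ^ k) = φ ((a₁ * a₂) ^ k) := by
    intro k
    cases k with
    | zero => simp
    | succ k => rw [pow_succ', mul_assoc, ← pow_swap, ← mul_assoc, hK (mul_mem k2 (ka k)) k1,
        ← mul_assoc, ← pow_succ']
  have memL : ∀ k, ∀ b ∈ altL a₁ a₂ k, b ∈ A := by
    intro k b hb
    rcases altL_mem _ _ _ _ hb with rfl | rfl <;> assumption
  have memL' : ∀ k, ∀ b ∈ altL a₂ a₁ k, b ∈ A := by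
    intro k b hb
    rcases altL_mem _ _ _ _ hb with rfl | rfl <;> assumption
  have memR : ∀ k, ∀ b ∈ List.replicate k (a₁ * a₂), b ∈ A := by
    intro k b hb
    rw [List.eq_of_mem_replicate hb]
    exact mul_mem ha₁ ha₂
  set m : ℕ → ℂ := fun k => φ ((a₁ * a₂) ^ k) with hm
  set u : ℕ → ℂ := fun k => φ (a₂ * (a₁ * a₂) ^ k) with hu
  set v : ℕ → ℂ := fun k => φ (a₁ * (a₂ * a₁) ^ k) with hv
  set x1 : ℕ → ℂ := fun t => φ (a₁ * Rw φ (altL a₂ a₁ (2 * t))) with hx1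
  set x2 : ℕ → ℂ := fun t => φ (a₂ * Rw φ (altL a₁ a₂ (2 * t))) with hx2
  set e : ℕ → ℂ := fun t => φ (a₁ * a₂ * Rw φ (List.replicate t (a₁ * a₂))) with he
  have core := series_core m u v x1 x2 e (by simp [hm, hφ1])
    (fun r => by
      have h := moment_expand' hφ1 a₁ (altL a₂ a₁ (2 * r + 1))
      rw [alt_sum_odd hφ1 hfree' false a₂ a₁ hA2 (by simpa using hA1) φ r, altL_prod_odd,
        ← mul_assoc, ← pow_succ'] at h
      exact h)
    (fun r => by
      have h := moment_expand' hφ1 a₂ (altL a₁ a₂ (2 * r))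
      rw [alt_sum_even hφ1 hfree' true a₁ a₂ hA1 (by simpa using hA2) φ r, altL_prod_even] at h
      exact h)
    (fun r => by
      have h := moment_expand' hφ1 a₁ (altL a₂ a₁ (2 * r))
      rw [alt_sum_even hφ1 hfree' false a₂ a₁ hA2 (by simpa using hA1) φ r, altL_prod_even] at h
      simp only [t3] at h
      exact h)
    (fun r => by
      have h := moment_expand' hφ1 (a₁ * a₂) (List.replicate r (a₁ * a₂))
      rw [rep_sum (a₁ * a₂) φ r, List.prod_replicate, ← pow_succ'] at h
      exact h) n
  -- the values of the one-sided words
  have Ha : ∀ s r, Φ ((a₁ * a₂) ^ s * q * (a₁ * a₂ * Yw q (List.replicate r (a₁ * a₂)))) =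
      m (s + r + 1) - ∑ t ∈ Finset.range (r + 1), m (s + r - t) * e t := by
    intro s r
    rw [H_formula hq2 hΦq hcamq _ (memR r) _ (hAs s) _ (mul_mem ha₁ ha₂),
      rep_sum (a₁ * a₂) (fun z => φ ((a₁ * a₂) ^ s * z)) r, List.prod_replicate, ← pow_succ',
      ← pow_add]
    congr 1
    refine Finset.sum_congr rfl fun t ht => ?_
    have ht : t ≤ r := by simp at ht; omega
    rw [← pow_add, ← Nat.add_sub_assoc ht]
  have H1 : ∀ s r, Φ ((a₁ * a₂) ^ s * q * (a₁ * Yw q (altL a₂ a₁ (2 * r + 1)))) =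
      m (s + r + 1) - ∑ t ∈ Finset.range (r + 1), u (s + r - t) * x1 t := by
    intro s r
    rw [H_formula hq2 hΦq hcamq _ (memL' _) _ (hAs s) _ ha₁,
      alt_sum_odd hφ1 hfree' false a₂ a₁ hA2 (by simpa using hA1)
        (fun z => φ ((a₁ * a₂) ^ s * z)) r, altL_prod_odd, ← mul_assoc a₁ a₂, ← pow_succ',
      ← pow_add]
    congr 1
    refine Finset.sum_congr rfl fun t ht => ?_
    have ht : t ≤ r := by simp at ht; omega
    rw [t1, ← Nat.add_sub_assoc ht]
  have H2 : ∀ s r, Φ ((a₁ * a₂) ^ s * a₁ * q * (a₂ * Yw q (altL a₁ a₂ (2 * r)))) =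
      m (s + r + 1) - ∑ t ∈ Finset.range (r + 1), v (s + r - t) * x2 t := by
    intro s r
    rw [H_formula hq2 hΦq hcamq _ (memL _) _ (mul_mem (hAs s) ha₁) _ ha₂,
      alt_sum_even hφ1 hfree' true a₁ a₂ hA1 (by simpa using hA2)
        (fun z => φ ((a₁ * a₂) ^ s * a₁ * z)) r, altL_prod_even, ← mul_assoc _ a₂,
      mul_assoc _ a₁ a₂, ← pow_succ, ← pow_add]
    congr 1
    · rw [show s + 1 + r = s + r + 1 by ring]
    refine Finset.sum_congr rfl fun t ht => ?_
    have ht : t ≤ r := by simp at ht; omega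
    rw [t2, ← Nat.add_sub_assoc ht]
  have Dnil : ∀ c ∈ A, φ' (c * Yw q []) = - φ c := by
    intro c hc
    have h0 := H_formula hq2 hΦq hcamq [] (by simp) c hc 1 A.one_mem
    have h1 : Φ (c * q) = φ c := by
      have h := cam_word hq2 hΦq hcamq (n := 0) (fun _ => 1) (fun _ => A.one_mem) c hc
      simpa [altWord] using h
    simp [Yw, mul_sub, hφ'A c hc, hφ'F _ (hFmulL c _ hqF), h1]
  -- peeling off letters, with `k` letters (pairs) remaining after `s`
  have DL : ∀ k s, φ' ((a₁ * a₂) ^ s * Yw q (List.replicate k (a₁ * a₂))) = - m (s + k) -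
      ∑ i ∈ Finset.range k, (m (s + k) - ∑ t ∈ Finset.range (k - i), m (s + k - 1 - t) * e t) := by
    intro k
    induction k with
    | zero => intro s; simpa using Dnil _ (hAs s)
    | succ k ih =>
      intro s
      rw [List.replicate_succ, D_cons (A := A) hFmulL hFmulR hφ'F hqF, Ha, ← pow_succ, ih,
        Finset.sum_range_succ' (fun i => m (s + (k + 1)) -
          ∑ t ∈ Finset.range (k + 1 - i), m (s + (k + 1) - 1 - t) * e t) k]
      simp only [Nat.add_sub_add_right, Nat.sub_zero, show s + 1 + k = s + k + 1 by ring,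
        show s + (k + 1) = s + k + 1 by ring, Nat.add_sub_cancel]
      ring
  have DR : ∀ k s, φ' ((a₁ * a₂) ^ s * Yw q (altL a₁ a₂ (2 * k))) = - m (s + k) -
      ∑ i ∈ Finset.range k, ((m (s + k) - ∑ t ∈ Finset.range (k - i), u (s + k - 1 - t) * x1 t) +
        (m (s + k) - ∑ t ∈ Finset.range (k - i), v (s + k - 1 - t) * x2 t)) := by
    intro k
    induction k with
    | zero => intro s; simpa [altL] using Dnil _ (hAs s)
    | succ k ih =>
      intro s
      rw [show 2 * (k + 1) = (2 * k + 1) + 1 by ring, altL,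
        D_cons (A := A) hFmulL hFmulR hφ'F hqF, H1, altL,
        D_cons (A := A) hFmulL hFmulR hφ'F hqF, H2, mul_assoc _ a₁ a₂, ← pow_succ, ih,
        Finset.sum_range_succ' (fun i =>
          (m (s + (k + 1)) - ∑ t ∈ Finset.range (k + 1 - i), u (s + (k + 1) - 1 - t) * x1 t) +
          (m (s + (k + 1)) - ∑ t ∈ Finset.range (k + 1 - i), v (s + (k + 1) - 1 - t) * x2 t)) k]
      simp only [Nat.add_sub_add_right, Nat.sub_zero, show s + 1 + k = s + k + 1 by ring,
        show s + (k + 1) = s + k + 1 by ring, Nat.add_sub_cancel]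
      ring
  have hL := DL (n + 1) 0
  have hR := DR (n + 1) 0
  simp only [pow_zero, one_mul, zero_add, Nat.add_sub_cancel, Finset.sum_sub_distrib,
    Finset.sum_add_distrib, sum_triangle, Finset.sum_const, Finset.card_range,
    nsmul_eq_mul] at hL hR
  rw [hL, hR]
  linear_combination -core

end TypeBPrime
end
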